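/- arXiv:1608.08421 — 3 statements merged into one kernel-verified Lean document; each statement's English description precedes it below -/
import Mathlib

section
/- Every respecting forest P of order 2 admits a covering into ℛ₂ which is an isomorphism onto its image and whose image consists of ordinals below 1^∞; in particular, every respecting forest of order 2 is, up to isomorphism, a finite substructure of ℛ₂ (a pure pattern of order 2). -/
open FirstOrder

/-- The relation symbols of the language of `ℛ₂`: three binary relations. -/
inductive ordRel : ℕ → Type
  | le : ordRel 2
  | le1 : ordRel 2
  | le2 : ordRel 2

/-- The first-order language with three binary relation symbols `≤`, `≤₁`, `≤₂`. -/
def ordLang : FirstOrder.Language := ⟨fun _ => Empty, ordRel⟩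

/-- The `ordLang`-structure on the set of ordinals below `β`, interpreting the three
relation symbols by `≤` and the given relations `le1`, `le2`. -/
def segStr (le1 le2 : Ordinal → Ordinal → Prop) (β : Ordinal) :
    ordLang.Structure {x : Ordinal // x < β} where
  funMap := fun f => Empty.elim f
  RelMap
    | .le => fun v => (v 0).1 ≤ (v 1).1
    | .le1 => fun v => le1 (v 0).1 (v 1).1
    | .le2 => fun v => le2 (v 0).1 (v 1).1

/-- Σ₁-formulas: a block of existential quantifiers applied to a quantifier-free formula. -/
inductive IsSigma1 {L : FirstOrder.Language} {α : Type} :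
    {n : ℕ} → L.BoundedFormula α n → Prop
  | of_isQF {n} {φ : L.BoundedFormula α n} (h : φ.IsQF) : IsSigma1 φ
  | ex {n} {φ : L.BoundedFormula α (n + 1)} (h : IsSigma1 φ) : IsSigma1 φ.ex

/-- Π₁-formulas: a block of universal quantifiers applied to a quantifier-free formula. -/
inductive IsPi1 {L : FirstOrder.Language} {α : Type} :
    {n : ℕ} → L.BoundedFormula α n → Prop
  | of_isQF {n} {φ : L.BoundedFormula α n} (h : φ.IsQF) : IsPi1 φ
  | all {n} {φ : L.BoundedFormula α (n + 1)} (h : IsPi1 φ) : IsPi1 φ.all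

/-- Σ₂-formulas: a block of existential quantifiers applied to a Π₁-formula. -/
inductive IsSigma2 {L : FirstOrder.Language} {α : Type} :
    {n : ℕ} → L.BoundedFormula α n → Prop
  | of_isPi1 {n} {φ : L.BoundedFormula α n} (h : IsPi1 φ) : IsSigma2 φ
  | ex {n} {φ : L.BoundedFormula α (n + 1)} (h : IsSigma2 φ) : IsSigma2 φ.ex

/-- Realization of a formula with `k` parameters in the segment structure below `β`. -/
def RealizeIn (le1 le2 : Ordinal → Ordinal → Prop) (β : Ordinal) {k : ℕ}
    (φ : ordLang.Formula (Fin k)) (v : Fin k → {x : Ordinal // x < β}) : Prop :=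
  letI := segStr le1 le2 β
  φ.Realize v

/-- `a ≤ b` and the segment below `a` is an elementary substructure of the segment below `b`
with respect to the class `C` of formulas (with parameters from below `a`). -/
def ElemSub (C : ∀ k : ℕ, ordLang.Formula (Fin k) → Prop)
    (le1 le2 : Ordinal → Ordinal → Prop) (a b : Ordinal) : Prop :=
  ∃ hab : a ≤ b,
    ∀ (k : ℕ) (φ : ordLang.Formula (Fin k)), C k φ →
      ∀ v : Fin k → {x : Ordinal // x < a},
        RealizeIn le1 le2 a φ v ↔
          RealizeIn le1 le2 b φ (fun j => ⟨(v j).1, lt_of_lt_of_le (v j).2 hab⟩)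

/-- The pair of relations `le1`, `le2` satisfies the simultaneous recursive definition of
`≤₁` and `≤₂` on the ordinals: `α ≤ᵢ β` iff `α ≤ β` and the segment below `α` is a
Σᵢ-elementary substructure of the segment below `β`. -/
def IsR2Pair (le1 le2 : Ordinal → Ordinal → Prop) : Prop :=
  (∀ a b, le1 a b ↔ ElemSub (fun _ φ => IsSigma1 φ) le1 le2 a b) ∧
  (∀ a b, le2 a b ↔ ElemSub (fun _ φ => IsSigma2 φ) le1 le2 a b)

/-- The strict part of `≤₁`. -/
def Lt1 (le1 : Ordinal → Ordinal → Prop) (a b : Ordinal) : Prop := le1 a b ∧ a ≠ b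

/-- The strict part of `≤₂`. -/
def Lt2 (le2 : Ordinal → Ordinal → Prop) (a b : Ordinal) : Prop := le2 a b ∧ a ≠ b

/-- `1^∞`: the least ordinal `ν` such that below `ν` there are `<₂`-chains of every finite
length. -/
noncomputable def OneInfty (le2 : Ordinal → Ordinal → Prop) : Ordinal :=
  sInf {ν : Ordinal | ∀ n : ℕ, ∃ β : Fin n → Ordinal,
    (∀ i, β i < ν) ∧
    ∀ (i : ℕ) (hi : i + 1 < n), Lt2 le2 (β ⟨i, Nat.lt_of_succ_lt hi⟩) (β ⟨i + 1, hi⟩)}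

/-- A respecting forest of order 2: a finite structure with a linear order `≤₀` and partial
orders `≤₁`, `≤₂` which are forests, with `≤₂ ⊆ ≤₁ ⊆ ≤₀`, and `≤ᵢ₊₁` respecting `≤ᵢ`. -/
structure RForest where
  P : Type
  [fintypeP : Fintype P]
  le0 : P → P → Prop
  le1 : P → P → Prop
  le2 : P → P → Prop
  le0_refl : ∀ p, le0 p p
  le0_trans : ∀ p q r, le0 p q → le0 q r → le0 p r
  le0_antisymm : ∀ p q, le0 p q → le0 q p → p = q
  le0_total : ∀ p q, le0 p q ∨ le0 q p
  le1_refl : ∀ p, le1 p p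
  le1_trans : ∀ p q r, le1 p q → le1 q r → le1 p r
  le1_antisymm : ∀ p q, le1 p q → le1 q p → p = q
  le2_refl : ∀ p, le2 p p
  le2_trans : ∀ p q r, le2 p q → le2 q r → le2 p r
  le2_antisymm : ∀ p q, le2 p q → le2 q p → p = q
  le2_sub_le1 : ∀ p q, le2 p q → le1 p q
  le1_sub_le0 : ∀ p q, le1 p q → le0 p q
  forest1 : ∀ p q r, le1 q p → le1 r p → le1 q r ∨ le1 r q
  forest2 : ∀ p q r, le2 q p → le2 r p → le2 q r ∨ le2 r q
  respects1 : ∀ p q r, le0 p q → le0 q r → le1 p r → le1 p q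
  respects2 : ∀ p q r, le1 p q → le1 q r → le2 p r → le2 p q

attribute [instance] RForest.fintypeP

/-- The finite set `X` of ordinals, with the relations induced from `ℛ₂`, is isomorphic to the
respecting forest `F`. -/
def Realizes (le1 le2 : Ordinal → Ordinal → Prop) (F : RForest) (X : Finset Ordinal) : Prop :=
  ∃ e : F.P ≃ {x // x ∈ X}, ∀ p q : F.P,
    (F.le0 p q ↔ ((e p : Ordinal) ≤ (e q : Ordinal))) ∧
    (F.le1 p q ↔ le1 (e p : Ordinal) (e q : Ordinal)) ∧
    (F.le2 p q ↔ le2 (e p : Ordinal) (e q : Ordinal))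

/-- Pointwise comparison of two finite sets of ordinals via their increasing enumerations. -/
def pwLE (X Y : Finset Ordinal) : Prop :=
  ∃ h : X.card = Y.card, ∀ i : Fin X.card,
    ((X.orderIsoOfFin rfl i : {x // x ∈ X}) : Ordinal) ≤
      ((Y.orderIsoOfFin h.symm i : {x // x ∈ Y}) : Ordinal)

/-- `X` is the isominimal realization of the respecting forest `F` in `ℛ₂`: it is isomorphic
to `F` and pointwise minimal among all finite substructures of `ℛ₂` isomorphic to `F`. -/
def IsIsominimalRealization (le1 le2 : Ordinal → Ordinal → Prop) (F : RForest)
    (X : Finset Ordinal) : Prop :=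
  Realizes le1 le2 F X ∧ ∀ Y : Finset Ordinal, Realizes le1 le2 F Y → pwLE X Y

/-- A covering of the respecting forest `F` into `ℛ₂`. -/
def IsCovering (le1 le2 : Ordinal → Ordinal → Prop) (F : RForest)
    (c : F.P → Ordinal) : Prop :=
  (∀ p q, F.le0 p q ↔ c p ≤ c q) ∧
  (∀ p q, F.le1 p q → le1 (c p) (c q)) ∧
  (∀ p q, F.le2 p q → le2 (c p) (c q))


/-- A covering of the respecting forest `F` into the respecting forest `G`. -/
def ForestCovering (F G : RForest) (f : F.P → G.P) : Prop :=
  (∀ p q, F.le0 p q ↔ G.le0 (f p) (f q)) ∧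
  (∀ p q, F.le1 p q → G.le1 (f p) (f q)) ∧
  (∀ p q, F.le2 p q → G.le2 (f p) (f q))

/-!
The relations `≤₁` and `≤₂` of `ℛ₂` transfer statements about tuples of ordinals: if `a ≤₁ b`, an
existential statement with parameters below `a` that holds below `b` already holds below `a`, and if
`a ≤₂ b`, a `∀∃`-statement that holds below `a` also holds below `b`.

Call a map of the forest into the ordinals a weak realization if it is a covering and reflects `≤₂`
on `≤₁`-comparable points. Weak realizations below `1^∞` are built by recursion along the forest
`≤₁`. If the next point `c` is a `≤₂`-successor of its `≤₁`-predecessor, it is mapped to the next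
member of a long `<₂`-chain; otherwise the part of the forest above `c` is first realized too far
down and then copied upwards by a transfer along `≤₂`, which can be done so that the unwanted
`≤₂`-relations fail.

A pointwise minimal weak realization is an isomorphism onto its image: a `≤₁`-relation that is not
required by the forest would allow one to reflect part of the image to smaller ordinals.
-/

open FirstOrder.Language

universe u v w

section Prenex

variable {L : FirstOrder.Language.{v, w}} {α : Type} {n : ℕ} {φ : L.BoundedFormula α n}

theorem comp_castLE_eq_snoc_iff {M : Type*} {n m : ℕ} (h : n + 1 ≤ m) (ys : Fin m → M)
    (xs : Fin n → M) (a : M) :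
    ys ∘ Fin.castLE h = Fin.snoc xs a ↔
      ys ∘ Fin.castLE (Nat.le_of_succ_le h) = xs ∧ ys (Fin.castLE h (Fin.last n)) = a := by
  simp only [funext_iff, Fin.forall_fin_succ', Function.comp_apply, Fin.snoc_castSucc,
    Fin.snoc_last, Fin.castLE_castSucc]

theorem IsSigma1.exists_isQF (hφ : IsSigma1 φ) :
    ∃ (m : ℕ) (hm : n ≤ m) (ψ : L.BoundedFormula α m), ψ.IsQF ∧
      ∀ (M : Type u) [L.Structure M] (v : α → M) (xs : Fin n → M),
        φ.Realize v xs ↔ ∃ ys : Fin m → M, ys ∘ Fin.castLE hm = xs ∧ ψ.Realize v ys := by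
  induction hφ with
  | @of_isQF n φ h => exact ⟨n, le_rfl, φ, h, fun M _ v xs => by simp⟩
  | ex _ ih =>
    obtain ⟨m, hm, ψ, hψ, H⟩ := ih
    refine ⟨m, Nat.le_of_succ_le hm, ψ, hψ, fun M _ v xs => ?_⟩
    simp only [BoundedFormula.realize_ex, H, comp_castLE_eq_snoc_iff]
    aesop

theorem IsPi1.exists_isQF (hφ : IsPi1 φ) :
    ∃ (m : ℕ) (hm : n ≤ m) (ψ : L.BoundedFormula α m), ψ.IsQF ∧
      ∀ (M : Type u) [L.Structure M] (v : α → M) (xs : Fin n → M),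
        φ.Realize v xs ↔ ∀ ys : Fin m → M, ys ∘ Fin.castLE hm = xs → ψ.Realize v ys := by
  induction hφ with
  | @of_isQF n φ h => exact ⟨n, le_rfl, φ, h, fun M _ v xs => by simp⟩
  | all _ ih =>
    obtain ⟨m, hm, ψ, hψ, H⟩ := ih
    refine ⟨m, Nat.le_of_succ_le hm, ψ, hψ, fun M _ v xs => ?_⟩
    simp only [BoundedFormula.realize_all, H, comp_castLE_eq_snoc_iff]
    aesop

theorem IsSigma2.exists_isQF (hφ : IsSigma2 φ) :
    ∃ (m : ℕ) (hm : n ≤ m) (p : ℕ) (hp : m ≤ p) (ψ : L.BoundedFormula α p), ψ.IsQF ∧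
      ∀ (M : Type u) [L.Structure M] (v : α → M) (xs : Fin n → M),
        φ.Realize v xs ↔ ∃ ys : Fin m → M, ys ∘ Fin.castLE hm = xs ∧
          ∀ zs : Fin p → M, zs ∘ Fin.castLE hp = ys → ψ.Realize v zs := by
  induction hφ with
  | @of_isPi1 n φ h =>
    obtain ⟨p, hp, ψ, hψ, H⟩ := h.exists_isQF
    exact ⟨n, le_rfl, p, hp, ψ, hψ, fun M _ v xs => (H M v xs).trans (by simp)⟩
  | ex _ ih =>
    obtain ⟨m, hm, p, hp, ψ, hψ, H⟩ := ih
    refine ⟨m, Nat.le_of_succ_le hm, p, hp, ψ, hψ, fun M _ v xs => ?_⟩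
    simp only [BoundedFormula.realize_ex, H, comp_castLE_eq_snoc_iff]
    aesop

theorem IsSigma1.isSigma2 (hφ : IsSigma1 φ) : IsSigma2 φ := by
  induction hφ with
  | of_isQF h => exact .of_isPi1 (.of_isQF h)
  | ex _ ih => exact .ex ih

theorem IsPi1.relabel {β : Type} {k : ℕ} (hφ : IsPi1 φ) (f : α → β ⊕ Fin k) :
    IsPi1 (φ.relabel f) := by
  induction hφ with
  | of_isQF h => exact .of_isQF (h.relabel f)
  | all _ ih => rw [BoundedFormula.relabel_all]; exact .all ih

theorem IsSigma1.exs (hφ : IsSigma1 φ) : IsSigma1 φ.exs := by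
  induction n with
  | zero => exact hφ
  | succ n ih => exact ih (.ex hφ)

theorem IsPi1.alls (hφ : IsPi1 φ) : IsPi1 φ.alls := by
  induction n with
  | zero => exact hφ
  | succ n ih => exact ih (.all hφ)

theorem IsSigma2.exs (hφ : IsSigma2 φ) : IsSigma2 φ.exs := by
  induction n with
  | zero => exact hφ
  | succ n ih => exact ih (.ex hφ)

theorem isQF_toFormula {α : Type*} {φ : L.BoundedFormula α n} (hφ : φ.IsQF) : φ.toFormula.IsQF := by
  induction hφ with
  | falsum => exact .falsum
  | imp _ _ ihφ ihψ => exact ihφ.imp ihψ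
  | of_isAtomic h =>
    cases h with
    | equal => exact .of_isAtomic (.equal _ _)
    | rel => exact .of_isAtomic (.rel _ _)

end Prenex

section QFDefinable

variable {le1 le2 : Ordinal.{u} → Ordinal.{u} → Prop} {α β A Y Z : Type*}

/-- The class of all ordinals as an `ordLang`-structure, of which the structures `segStr le1 le2 β`
are substructures. -/
@[reducible]
def ordStr (le1 le2 : Ordinal.{u} → Ordinal.{u} → Prop) : ordLang.Structure Ordinal.{u} where
  funMap := fun f => Empty.elim f
  RelMap
    | .le => fun v => v 0 ≤ v 1
    | .le1 => fun v => le1 (v 0) (v 1)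
    | .le2 => fun v => le2 (v 0) (v 1)

/-- The inclusion of a segment into the structure of all ordinals. -/
def segEmbedding (le1 le2 : Ordinal.{u} → Ordinal.{u} → Prop) (β : Ordinal.{u}) :
    letI := ordStr le1 le2
    letI := segStr le1 le2 β
    {x : Ordinal // x < β} ↪[ordLang] Ordinal.{u} :=
  letI := ordStr le1 le2
  letI := segStr le1 le2 β
  { toFun := Subtype.val
    inj' := Subtype.val_injective
    map_fun' := fun f => Empty.elim f
    map_rel' := by
      intro n r x
      cases r <;> exact Iff.rfl }

/-- The relation `R` on tuples of ordinals is defined by a quantifier-free formula in the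
language of `ℛ₂`. -/
def QFDefinable (le1 le2 : Ordinal.{u} → Ordinal.{u} → Prop) (R : (α → Ordinal.{u}) → Prop) :
    Prop :=
  letI := ordStr le1 le2
  ∃ φ : ordLang.Formula α, φ.IsQF ∧ ∀ v, φ.Realize v ↔ R v

namespace QFDefinable

variable {R S : (α → Ordinal.{u}) → Prop}

theorem le_apply (i j : α) : QFDefinable le1 le2 fun v => v i ≤ v j :=
  ⟨Relations.formula₂ (L := ordLang) ordRel.le (Term.var i) (Term.var j),
    .of_isAtomic (.rel _ _), fun _ => Iff.rfl⟩

theorem le1_apply (i j : α) : QFDefinable le1 le2 fun v => le1 (v i) (v j) :=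
  ⟨Relations.formula₂ (L := ordLang) ordRel.le1 (Term.var i) (Term.var j),
    .of_isAtomic (.rel _ _), fun _ => Iff.rfl⟩

theorem le2_apply (i j : α) : QFDefinable le1 le2 fun v => le2 (v i) (v j) :=
  ⟨Relations.formula₂ (L := ordLang) ordRel.le2 (Term.var i) (Term.var j),
    .of_isAtomic (.rel _ _), fun _ => Iff.rfl⟩

theorem imp (hR : QFDefinable le1 le2 R) (hS : QFDefinable le1 le2 S) :
    QFDefinable le1 le2 fun v => R v → S v := by
  obtain ⟨φ, hφ, hφR⟩ := hR
  obtain ⟨ψ, hψ, hψS⟩ := hS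
  exact ⟨φ.imp ψ, hφ.imp hψ, fun v => imp_congr (hφR v) (hψS v)⟩

theorem not (hR : QFDefinable le1 le2 R) : QFDefinable le1 le2 fun v => ¬ R v := by
  obtain ⟨φ, hφ, hφR⟩ := hR
  exact ⟨φ.not, hφ.not, fun v => not_congr (hφR v)⟩

theorem const (p : Prop) : QFDefinable le1 le2 fun _ : α → Ordinal.{u} => p := by
  by_cases hp : p
  · exact ⟨⊤, .top, fun v => by simp [hp]⟩
  · exact ⟨⊥, .falsum, fun v => by simp [hp]⟩

theorem and (hR : QFDefinable le1 le2 R) (hS : QFDefinable le1 le2 S) :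
    QFDefinable le1 le2 fun v => R v ∧ S v := by
  simpa only [Classical.not_imp, not_not] using (hR.imp hS.not).not

theorem or (hR : QFDefinable le1 le2 R) (hS : QFDefinable le1 le2 S) :
    QFDefinable le1 le2 fun v => R v ∨ S v := by
  simpa only [← or_iff_not_imp_left] using hR.not.imp hS

theorem iff (hR : QFDefinable le1 le2 R) (hS : QFDefinable le1 le2 S) :
    QFDefinable le1 le2 fun v => R v ↔ S v := by
  simpa only [← iff_def] using (hR.imp hS).and (hS.imp hR)

theorem lt_apply (i j : α) : QFDefinable le1 le2 fun v => v i < v j := by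
  simpa only [not_le] using (le_apply j i).not

theorem eq_apply (i j : α) : QFDefinable le1 le2 fun v => v i = v j := by
  simpa only [← le_antisymm_iff] using (le_apply i j).and (le_apply j i)

theorem forall_finite {ι : Type*} [Finite ι] {R : ι → (α → Ordinal.{u}) → Prop}
    (hR : ∀ i, QFDefinable le1 le2 (R i)) : QFDefinable le1 le2 fun v => ∀ i, R i v := by
  classical
  cases nonempty_fintype ι
  suffices ∀ s : Finset ι, QFDefinable le1 le2 fun v => ∀ i ∈ s, R i v by
    simpa using this Finset.univ
  intro s
  induction s using Finset.induction_on with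
  | empty => simpa using const (α := α) True
  | insert a s _ ih => simpa using (hR a).and ih

theorem comp (hR : QFDefinable le1 le2 R) (f : α → β) :
    QFDefinable le1 le2 fun v : β → Ordinal.{u} => R (v ∘ f) := by
  let := ordStr le1 le2
  obtain ⟨φ, hφ, hφR⟩ := hR
  exact ⟨φ.relabel f, hφ.relabel _, fun v => Formula.realize_relabel.trans (hφR _)⟩

end QFDefinable

/-- The parameters `v` satisfy the existential formula `∃ y, R(v, y)` in the segment below `a`. -/
def ExistsBelow (a : Ordinal.{u}) (R : (A ⊕ Y → Ordinal.{u}) → Prop) (v : A → Ordinal.{u}) : Prop :=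
  ∃ y : Y → {x : Ordinal.{u} // x < a}, R (Sum.elim v (Subtype.val ∘ y))

/-- The parameters `v` satisfy the `Π₂`-formula `∀ y, ∃ z, R(v, y, z)` in the segment below `a`. -/
def ForallExistsBelow (a : Ordinal.{u}) (R : ((A ⊕ Y) ⊕ Z → Ordinal.{u}) → Prop)
    (v : A → Ordinal.{u}) : Prop :=
  ∀ y : Y → {x : Ordinal.{u} // x < a}, ExistsBelow a R (Sum.elim v (Subtype.val ∘ y))

theorem existsBelow_iff {a : Ordinal.{u}} {R : (A ⊕ Y → Ordinal.{u}) → Prop} {v : A → Ordinal.{u}} :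
    ExistsBelow a R v ↔ ∃ y : Y → Ordinal.{u}, (∀ i, y i < a) ∧ R (Sum.elim v y) :=
  ⟨fun ⟨y, hR⟩ => ⟨_, fun i => (y i).2, hR⟩, fun ⟨y, hy, hR⟩ => ⟨fun i => ⟨y i, hy i⟩, hR⟩⟩

theorem forallExistsBelow_iff {a : Ordinal.{u}} {R : ((A ⊕ Y) ⊕ Z → Ordinal.{u}) → Prop}
    {v : A → Ordinal.{u}} :
    ForallExistsBelow a R v ↔
      ∀ y : Y → Ordinal.{u}, (∀ i, y i < a) → ExistsBelow a R (Sum.elim v y) :=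
  ⟨fun h y hy => h fun i => ⟨y i, hy i⟩, fun h y => h _ fun i => (y i).2⟩

theorem ExistsBelow.mono {a b : Ordinal.{u}} (hab : a ≤ b) {R : (A ⊕ Y → Ordinal.{u}) → Prop}
    {v : A → Ordinal.{u}} (h : ExistsBelow a R v) : ExistsBelow b R v := by
  obtain ⟨y, hR⟩ := h
  exact ⟨fun i => ⟨y i, (y i).2.trans_le hab⟩, hR⟩

theorem realize_segStr_iff {φ : ordLang.Formula α} (hφ : φ.IsQF) (β : Ordinal.{u})
    (v : α → {x : Ordinal // x < β}) :
    (letI := segStr le1 le2 β; φ.Realize v) ↔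
      (letI := ordStr le1 le2; φ.Realize (Subtype.val ∘ v)) := by
  let := ordStr le1 le2
  let := segStr le1 le2 β
  refine (hφ.realize_embedding (segEmbedding le1 le2 β)).symm.trans (iff_of_eq ?_)
  exact congrArg _ (Subsingleton.elim _ _)

theorem QFDefinable.exists_isSigma1 {k m : ℕ} {R : (Fin k ⊕ Fin m → Ordinal.{u}) → Prop}
    (hR : QFDefinable le1 le2 R) :
    ∃ φ : ordLang.Formula (Fin k), IsSigma1 φ ∧
      ∀ β v, RealizeIn le1 le2 β φ v ↔ ExistsBelow β R (Subtype.val ∘ v) := by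
  obtain ⟨φ, hφ, hφR⟩ := hR
  refine ⟨φ.iExs (Fin m), IsSigma1.exs (.of_isQF (hφ.relabel _)), fun β v => ?_⟩
  simp only [RealizeIn, Formula.realize_iExs, realize_segStr_iff hφ, hφR, Sum.comp_elim,
    ExistsBelow]

theorem QFDefinable.exists_isSigma2 {k m p : ℕ}
    {R : ((Fin k ⊕ Fin m) ⊕ Fin p → Ordinal.{u}) → Prop} (hR : QFDefinable le1 le2 R) :
    ∃ φ : ordLang.Formula (Fin k), IsSigma2 φ ∧
      ∀ β v, RealizeIn le1 le2 β φ v ↔ ¬ ForallExistsBelow β R (Subtype.val ∘ v) := by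
  obtain ⟨φ, hφ, hφR⟩ := hR.not
  refine ⟨(φ.iAlls (Fin p)).iExs (Fin m), IsSigma2.exs (.of_isPi1
    (IsPi1.relabel (IsPi1.alls (.of_isQF (hφ.relabel _))) _)), fun β v => ?_⟩
  simp only [RealizeIn, Formula.realize_iExs, Formula.realize_iAlls, realize_segStr_iff hφ, hφR,
    ForallExistsBelow, ExistsBelow, Sum.comp_elim, not_forall, not_exists]

theorem exists_qfDefinable_of_isQF {m : ℕ} {φ : ordLang.BoundedFormula α m} (hφ : φ.IsQF) :
    ∃ R : (α ⊕ Fin m → Ordinal.{u}) → Prop, QFDefinable le1 le2 R ∧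
      ∀ (β : Ordinal.{u}) (v : α → {x : Ordinal // x < β}) (xs : Fin m → {x : Ordinal // x < β}),
        (letI := segStr le1 le2 β; φ.Realize v xs) ↔
          R (Sum.elim (Subtype.val ∘ v) (Subtype.val ∘ xs)) := by
  let := ordStr le1 le2
  refine ⟨_, ⟨φ.toFormula, isQF_toFormula hφ, fun _ => Iff.rfl⟩, fun β v xs => ?_⟩
  let := segStr le1 le2 β
  rw [← Sum.comp_elim, ← realize_segStr_iff (isQF_toFormula hφ)]
  exact (BoundedFormula.realize_toFormula φ (Sum.elim v xs)).symm

theorem IsSigma1.exists_qfDefinable {k : ℕ} {φ : ordLang.Formula (Fin k)} (hφ : IsSigma1 φ) :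
    ∃ (m : ℕ) (R : (Fin k ⊕ Fin m → Ordinal.{u}) → Prop), QFDefinable le1 le2 R ∧
      ∀ β v, RealizeIn le1 le2 β φ v ↔ ExistsBelow β R (Subtype.val ∘ v) := by
  obtain ⟨m, hm, ψ, hψ, hφψ⟩ := hφ.exists_isQF
  obtain ⟨R, hR, hψR⟩ := exists_qfDefinable_of_isQF (le1 := le1) (le2 := le2) hψ
  refine ⟨m, R, hR, fun β v => ?_⟩
  let := segStr le1 le2 β
  refine (hφψ _ v default).trans ?_
  simp only [eq_iff_true_of_subsingleton, true_and, hψR, ExistsBelow]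

theorem IsSigma2.exists_qfDefinable {k : ℕ} {φ : ordLang.Formula (Fin k)} (hφ : IsSigma2 φ) :
    ∃ (m p : ℕ) (R : ((Fin k ⊕ Fin m) ⊕ Fin p → Ordinal.{u}) → Prop), QFDefinable le1 le2 R ∧
      ∀ β v, RealizeIn le1 le2 β φ v ↔ ¬ ForallExistsBelow β R (Subtype.val ∘ v) := by
  obtain ⟨m, hm, p, hp, ψ, hψ, hφψ⟩ := hφ.exists_isQF
  obtain ⟨S, hS, hψS⟩ := exists_qfDefinable_of_isQF (le1 := le1) (le2 := le2) hψ
  refine ⟨m, p, fun g => (∀ i, g (.inr (Fin.castLE hp i)) = g (.inl (.inr i))) ∧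
    ¬ S (g ∘ Sum.map Sum.inl id), (QFDefinable.forall_finite fun i => .eq_apply _ _).and
    (hS.comp _).not, fun β v => ?_⟩
  let := segStr le1 le2 β
  refine (hφψ _ v default).trans ?_
  simp [funext_iff, hψS, ForallExistsBelow, ExistsBelow, Subtype.ext_iff, Sum.elim_comp_map]

end QFDefinable

/-- The properties of the relations `≤₁` and `≤₂` of a respecting forest of order 2 that its
realizations depend on. They are shared by the respecting forests and by the ordinals. -/
structure RespectingPair {ι : Type*} [Preorder ι] (r1 r2 : ι → ι → Prop) : Prop where
  refl2 : ∀ p, r2 p p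
  trans1 : ∀ {p q r}, r1 p q → r1 q r → r1 p r
  trans2 : ∀ {p q r}, r2 p q → r2 q r → r2 p r
  le_of_r1 : ∀ {p q}, r1 p q → p ≤ q
  r1_of_r2 : ∀ {p q}, r2 p q → r1 p q
  respects1 : ∀ {p q r}, p ≤ q → q ≤ r → r1 p r → r1 p q
  respects2 : ∀ {p q r}, r1 p q → r1 q r → r2 p r → r2 p q

namespace RespectingPair

variable {ι : Type*} [Preorder ι] {r1 r2 : ι → ι → Prop} (G : RespectingPair r1 r2) {p q r : ι}
include G

theorem refl1 (p : ι) : r1 p p := G.r1_of_r2 (G.refl2 p)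

theorem le_of_r2 (h : r2 p q) : p ≤ q := G.le_of_r1 (G.r1_of_r2 h)

theorem r2_of_le (hpq : p ≤ q) (hp : r2 p r) (hq : r2 q r) : r2 p q :=
  G.respects2 (G.respects1 hpq (G.le_of_r2 hq) (G.r1_of_r2 hp)) (G.r1_of_r2 hq) hp

end RespectingPair

section ExtendBot

variable {ι : Type*} {r1 r2 : ι → ι → Prop}

/-- The extension of the relation `r` to a new least point `⊥`, which is related to itself, and to
all other points if `B` holds and to none of them otherwise. -/
def extendBot (B : Prop) (r : ι → ι → Prop) : WithBot ι → WithBot ι → Prop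
  | ⊥, ⊥ => True
  | ⊥, WithBot.some _ => B
  | WithBot.some _, ⊥ => False
  | WithBot.some k, WithBot.some l => r k l

theorem extendBot_trans {B : Prop} {r : ι → ι → Prop}
    (hr : ∀ k l m : ι, r k l → r l m → r k m) {p q s : WithBot ι} (hpq : extendBot B r p q)
    (hqs : extendBot B r q s) : extendBot B r p s := by
  cases p <;> cases q <;> cases s <;> simp_all only [extendBot]
  exact hr _ _ _ hpq hqs

theorem RespectingPair.withBot [Preorder ι] (G : RespectingPair r1 r2) :
    RespectingPair (extendBot True r1) (extendBot False r2) where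
  refl2
    | ⊥ => trivial
    | WithBot.some k => G.refl2 k
  trans1 := extendBot_trans (r := r1) fun _ _ _ => G.trans1
  trans2 := extendBot_trans (r := r2) fun _ _ _ => G.trans2
  le_of_r1 {p q} h := by
    cases p <;> cases q <;> simp_all only [extendBot, bot_le]
    exact WithBot.coe_le_coe.2 (G.le_of_r1 h)
  r1_of_r2 {p q} h := by
    cases p <;> cases q <;> simp_all only [extendBot]
    exact G.r1_of_r2 h
  respects1 {p q r} hpq hqr h := by
    cases p <;> cases q <;> cases r <;>
      simp_all only [extendBot, WithBot.coe_le_coe, WithBot.not_coe_le_bot]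
    exact G.respects1 hpq hqr h
  respects2 {p q r} hpq hqr h := by
    cases p <;> cases q <;> cases r <;> simp_all only [extendBot]
    exact G.respects2 hpq hqr h

end ExtendBot

namespace IsR2Pair

variable {le1 le2 : Ordinal.{u} → Ordinal.{u} → Prop} {a b : Ordinal.{u}} {A Y Z : Type*}

theorem le1_iff (H : IsR2Pair le1 le2) :
    le1 a b ↔ a ≤ b ∧ ∀ {k m : ℕ} {R : (Fin k ⊕ Fin m → Ordinal.{u}) → Prop},
      QFDefinable le1 le2 R → ∀ v : Fin k → Ordinal.{u}, (∀ i, v i < a) →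
        ExistsBelow b R v → ExistsBelow a R v := by
  rw [H.1]
  constructor
  · rintro ⟨hab, hE⟩
    refine ⟨hab, fun {k m R} hR v hv => ?_⟩
    obtain ⟨φ, hφ, hφR⟩ := hR.exists_isSigma1
    have := hE k φ hφ fun i => ⟨v i, hv i⟩
    rw [hφR, hφR] at this
    exact this.2
  · rintro ⟨hab, hE⟩
    refine ⟨hab, fun k φ hφ v => ?_⟩
    obtain ⟨m, R, hR, hφR⟩ := hφ.exists_qfDefinable (le1 := le1) (le2 := le2)
    rw [hφR, hφR]
    exact ⟨ExistsBelow.mono hab, hE hR _ fun i => (v i).2⟩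

theorem le_of_le1 (H : IsR2Pair le1 le2) (h : le1 a b) : a ≤ b := (H.le1_iff.1 h).1

theorem reflect [Finite A] [Finite Y] (H : IsR2Pair le1 le2) (h : le1 a b)
    {R : (A ⊕ Y → Ordinal.{u}) → Prop} (hR : QFDefinable le1 le2 R) {v : A → Ordinal.{u}}
    (hv : ∀ i, v i < a) {y : Y → Ordinal.{u}} (hy : ∀ i, y i < b) (hvy : R (Sum.elim v y)) :
    ∃ y' : Y → Ordinal.{u}, (∀ i, y' i < a) ∧ R (Sum.elim v y') := by
  obtain ⟨k, ⟨eA⟩⟩ := Finite.exists_equiv_fin A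
  obtain ⟨m, ⟨eY⟩⟩ := Finite.exists_equiv_fin Y
  have hE := (H.le1_iff.1 h).2 (hR.comp (Sum.map eA eY)) (v ∘ eA.symm) (fun i => hv _)
  simp only [existsBelow_iff, Sum.elim_comp_map, Function.comp_assoc, Equiv.symm_comp_self,
    Function.comp_id] at hE
  obtain ⟨y', hy', hR'⟩ := hE ⟨y ∘ eY.symm, fun i => hy _, by simpa [Function.comp_assoc]⟩
  exact ⟨y' ∘ eY, fun i => hy' _, hR'⟩

theorem le2_iff (H : IsR2Pair le1 le2) :
    le2 a b ↔ le1 a b ∧ ∀ {k m p : ℕ} {R : ((Fin k ⊕ Fin m) ⊕ Fin p → Ordinal.{u}) → Prop},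
      QFDefinable le1 le2 R → ∀ v : Fin k → Ordinal.{u}, (∀ i, v i < a) →
        ForallExistsBelow a R v → ForallExistsBelow b R v := by
  constructor
  · intro h
    obtain ⟨hab, hE⟩ := (H.2 a b).1 h
    refine ⟨(H.1 a b).2 ⟨hab, fun k φ hφ => hE k φ hφ.isSigma2⟩, fun {k m p R} hR v hv => ?_⟩
    obtain ⟨φ, hφ, hφR⟩ := hR.exists_isSigma2
    have := hE k φ hφ fun i => ⟨v i, hv i⟩
    rw [hφR, hφR, not_iff_not] at this
    exact this.1
  · rintro ⟨h1, hE⟩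
    have hab := H.le_of_le1 h1
    refine (H.2 a b).2 ⟨hab, fun k φ hφ v => ?_⟩
    obtain ⟨m, p, R, hR, hφR⟩ := hφ.exists_qfDefinable (le1 := le1) (le2 := le2)
    rw [hφR, hφR, not_iff_not]
    refine ⟨hE hR _ fun i => (v i).2, fun hb => forallExistsBelow_iff.2 fun y hy => ?_⟩
    obtain ⟨z, hz, hvyz⟩ :=
      existsBelow_iff.1 (forallExistsBelow_iff.1 hb y fun i => (hy i).trans_le hab)
    exact existsBelow_iff.2 (H.reflect h1 hR (Sum.forall.2 ⟨fun i => (v i).2, hy⟩) hz hvyz)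

theorem forallExistsBelow_of_le2 [Finite A] [Finite Y] [Finite Z] (H : IsR2Pair le1 le2)
    (h : le2 a b) {R : ((A ⊕ Y) ⊕ Z → Ordinal.{u}) → Prop} (hR : QFDefinable le1 le2 R)
    {v : A → Ordinal.{u}} (hv : ∀ i, v i < a) (ha : ForallExistsBelow a R v) :
    ForallExistsBelow b R v := by
  obtain ⟨k, ⟨eA⟩⟩ := Finite.exists_equiv_fin A
  obtain ⟨m, ⟨eY⟩⟩ := Finite.exists_equiv_fin Y
  obtain ⟨p, ⟨eZ⟩⟩ := Finite.exists_equiv_fin Z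
  have reindex (d : Ordinal.{u}) : ForallExistsBelow d R v ↔ ForallExistsBelow d
      (fun g => R (g ∘ Sum.map (Sum.map eA eY) eZ)) (v ∘ eA.symm) := by
    simp only [ForallExistsBelow, ExistsBelow, Sum.elim_comp_map, Function.comp_assoc,
      Equiv.symm_comp_self, Function.comp_id]
    refine (eY.arrowCongr (Equiv.refl _)).forall_congr fun y =>
      (eZ.arrowCongr (Equiv.refl _)).exists_congr fun z => ?_
    simp [Equiv.arrowCongr, Function.comp_assoc]
  rw [reindex] at ha ⊢
  exact (H.le2_iff.1 h).2 (hR.comp _) _ (fun i => hv _) ha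

theorem respectingPair (H : IsR2Pair le1 le2) : RespectingPair le1 le2 where
  refl2 a := (H.2 a a).2 ⟨le_rfl, fun _ _ _ _ => Iff.rfl⟩
  trans1 hab hbc := by
    rw [H.1] at hab hbc ⊢
    exact ⟨hab.1.trans hbc.1, fun k φ hφ v => (hab.2 k φ hφ v).trans (hbc.2 k φ hφ _)⟩
  trans2 hab hbc := by
    rw [H.2] at hab hbc ⊢
    exact ⟨hab.1.trans hbc.1, fun k φ hφ v => (hab.2 k φ hφ v).trans (hbc.2 k φ hφ _)⟩
  le_of_r1 := H.le_of_le1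
  r1_of_r2 h := (H.le2_iff.1 h).1
  respects1 hab hbc h := H.le1_iff.2
    ⟨hab, fun hR v hv hb => (H.le1_iff.1 h).2 hR v hv (hb.mono hbc)⟩
  respects2 hab hbc h := by
    refine H.le2_iff.2 ⟨hab, fun hR v hv ha => forallExistsBelow_iff.2 fun y hy => ?_⟩
    obtain ⟨z, hz, hvyz⟩ := existsBelow_iff.1 (forallExistsBelow_iff.1
      ((H.le2_iff.1 h).2 hR v hv ha) y fun i => (hy i).trans_le (H.le_of_le1 hbc))
    refine existsBelow_iff.2 (H.reflect hbc hR (Sum.forall.2 ⟨fun i => ?_, hy⟩) hz hvyz)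
    exact (hv i).trans_le (H.le_of_le1 hab)

theorem exists_gt_of_le1 (H : IsR2Pair le1 le2) (h : le1 a b) (hab : a < b) :
    ∀ x < a, ∃ y < a, x < y := by
  intro x hx
  obtain ⟨y, hy, hxy⟩ := H.reflect h (QFDefinable.lt_apply (Sum.inl ()) (Sum.inr ()))
    (v := fun _ => x) (fun _ => hx) (y := fun _ => a) (fun _ => hab) hx
  exact ⟨y (), hy (), hxy⟩

theorem le1_of_forall_lt (H : IsR2Pair le1 le2) (hb : ∀ x < b, ∃ y < b, x < y) (hab : a < b)
    (h : ∀ z, a ≤ z → z < b → le1 a z) : le1 a b := by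
  refine H.le1_iff.2 ⟨hab.le, fun {k m R} hR v hv hex => ?_⟩
  obtain ⟨y, hy, hvy⟩ := existsBelow_iff.1 hex
  obtain ⟨z, haz, hyz, hzb⟩ : ∃ z, a ≤ z ∧ (∀ i, y i < z) ∧ z < b := by
    have hlt : (Finset.univ.sup y ⊔ a) < b :=
      max_lt ((Finset.sup_lt_iff (bot_le.trans_lt hab)).2 fun i _ => hy i) hab
    obtain ⟨z, hzb, hz⟩ := hb _ hlt
    exact ⟨z, le_sup_right.trans hz.le, fun i =>
      ((Finset.le_sup (Finset.mem_univ i)).trans le_sup_left).trans_lt hz, hzb⟩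
  exact (H.le1_iff.1 (h z haz hzb)).2 hR v hv (existsBelow_iff.2 ⟨y, hyz, hvy⟩)

end IsR2Pair

section LongChains

theorem exists_gt_forall_lt {I : Type*} [Small.{u} I] {n : I → ℕ}
    (w : ∀ i, (Fin (n i) → Ordinal.{u}) → Ordinal.{u}) (c : Ordinal.{u}) :
    ∃ a > c, ∀ i (x : Fin (n i) → Ordinal.{u}), (∀ j, x j < a) → w i x < a := by
  let f (g : Ordinal.{u}) : Ordinal.{u} :=
    max g (⨆ p : Σ i, Fin (n i) → Set.Iio g, Order.succ (w p.1 fun j => p.2 j))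
  have hf : id ≤ f := fun g => le_max_left _ _
  have hle := Ordinal.iterate_le_nfp f (Order.succ c)
  refine ⟨Ordinal.nfp f (Order.succ c), (Order.lt_succ c).trans_le (hle 0), fun i x hx => ?_⟩
  choose m hm using fun j => Ordinal.lt_nfp_iff.1 (hx j)
  let N := Finset.univ.sup m
  have hN (j) : x j < f^[N] (Order.succ c) := (hm j).trans_le
    (Function.monotone_iterate_of_id_le hf (Finset.le_sup (Finset.mem_univ j)) _)
  refine lt_of_lt_of_le ?_ (hle (N + 1))
  rw [Function.iterate_succ_apply']
  exact (Order.lt_succ _).trans_le ((Ordinal.le_iSup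
    (fun p : Σ i, Fin (n i) → Set.Iio (f^[N] (Order.succ c)) => Order.succ (w p.1 fun j => p.2 j))
    ⟨i, fun j => ⟨x j, hN j⟩⟩).trans (le_max_right _ _))

theorem exists_gt_realizeIn_iff (le1 le2 : Ordinal.{u} → Ordinal.{u} → Prop) (c : Ordinal.{u}) :
    ∃ a > c, ∀ (k : ℕ) (φ : ordLang.Formula (Fin k)) (v : Fin k → {x : Ordinal // x < a}),
      RealizeIn le1 le2 a φ v ↔ (letI := ordStr le1 le2; φ.Realize (Subtype.val ∘ v)) := by
  let := ordStr le1 le2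
  have skolem (φ : Σ n, ordLang.BoundedFormula Empty (n + 1)) (x : Fin φ.1 → Ordinal.{u}) :
      ∃ z : Ordinal.{u}, ∀ v y, φ.2.Realize v (Fin.snoc x y : Fin (φ.1 + 1) → Ordinal.{u}) →
        φ.2.Realize v (Fin.snoc x z : Fin (φ.1 + 1) → Ordinal.{u}) := by
    by_cases h : ∃ v y, φ.2.Realize v (Fin.snoc x y : Fin (φ.1 + 1) → Ordinal.{u})
    · obtain ⟨v, y, hy⟩ := h
      exact ⟨y, fun v' _ _ => Subsingleton.elim v v' ▸ hy⟩
    · exact ⟨0, fun v y hy => (h ⟨v, y, hy⟩).elim⟩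
  choose w hw using skolem
  obtain ⟨a, hca, ha⟩ := exists_gt_forall_lt w c
  refine ⟨a, hca, fun k φ v => ?_⟩
  let := segStr le1 le2 a
  refine (Embedding.isElementary_of_exists (segEmbedding le1 le2 a) ?_ φ v).symm
  intro n φ x y hy
  exact ⟨⟨w ⟨n, φ⟩ (Subtype.val ∘ x), ha _ _ fun j => (x j).2⟩, hw ⟨n, φ⟩ _ _ y hy⟩

variable {le1 le2 : Ordinal.{u} → Ordinal.{u} → Prop}

theorem IsR2Pair.lt_of_lt2 {a b : Ordinal.{u}} (H : IsR2Pair le1 le2) (h : Lt2 le2 a b) : a < b :=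
  (H.respectingPair.le_of_r2 h.1).lt_of_ne h.2

theorem Lt2.of_le2 {a b c : Ordinal.{u}} (H : IsR2Pair le1 le2) (hab : le2 a b)
    (hbc : Lt2 le2 b c) : Lt2 le2 a c :=
  ⟨H.respectingPair.trans2 hab hbc.1,
    ((H.respectingPair.le_of_r2 hab).trans_lt (H.lt_of_lt2 hbc)).ne⟩

theorem exists_lt2_chain (H : IsR2Pair le1 le2) :
    ∃ β : ℕ → Ordinal.{u}, ∀ i, Lt2 le2 (β i) (β (i + 1)) := by
  choose g hlt hg using exists_gt_realizeIn_iff le1 le2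
  refine ⟨fun i => g^[i + 1] 0, fun i => ?_⟩
  simp only [Function.iterate_succ_apply' g]
  exact ⟨(H.2 _ _).2 ⟨(hlt _).le, fun k φ _ v => by rw [hg, hg]; rfl⟩, (hlt _).ne⟩

theorem exists_lt2_chain_lt_oneInfty (H : IsR2Pair le1 le2) (n : ℕ) : ∃ β : ℕ → Ordinal.{u},
    (∀ i, β i < OneInfty le2) ∧ ∀ i j, i < j → j ≤ n → Lt2 le2 (β i) (β j) := by
  obtain ⟨β, hβ⟩ := exists_lt2_chain H
  obtain ⟨γ, hγlt, hγ⟩ := csInf_mem (s := {ν : Ordinal.{u} | ∀ n : ℕ, ∃ β : Fin n → Ordinal.{u},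
      (∀ i, β i < ν) ∧
      ∀ (i : ℕ) (hi : i + 1 < n), Lt2 le2 (β ⟨i, Nat.lt_of_succ_lt hi⟩) (β ⟨i + 1, hi⟩)})
    ⟨Order.succ (⨆ n, β n), fun n => ⟨fun i => β i,
      fun i => Order.lt_succ_of_le (Ordinal.le_iSup β i), fun i _ => hβ i⟩⟩ (n + 1)
  refine ⟨fun i => γ (Fin.ofNat (n + 1) i), fun i => hγlt _, fun i j hij hjn => ?_⟩
  have hsucc (k) (hk : k + 1 ≤ n) :
      Lt2 le2 (γ (Fin.ofNat (n + 1) k)) (γ (Fin.ofNat (n + 1) (k + 1))) := by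
    convert hγ k (by lia) using 2 <;> ext <;> simp <;> lia
  induction j, hij using Nat.le_induction with
  | base => exact hsucc i hjn
  | succ k _ ih => exact .of_le2 H (ih (by lia)).1 (hsucc k hjn)

end LongChains

namespace IsR2Pair

variable {le1 le2 : Ordinal.{u} → Ordinal.{u} → Prop} {P b t σ ρ : Ordinal.{u}} {A Y : Type*}
  [Finite A] [Finite Y] {R : (A ⊕ Y → Ordinal.{u}) → Prop} {v : A → Ordinal.{u}}
  {e : Y → Ordinal.{u}}

/- The transferred `Π₂`-statement reads: for all `σ ≤ ρ`, either `σ ≤₁ z` fails for some `z ≥ σ`,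
or there is a copy of `e` beyond `ρ` that lies `≤₁`-above `σ`. Below `P` it holds because in the
second case `σ ≤₁ P`, so that `e` itself is such a copy and can be reflected from `t` to `P`. -/
theorem exists_copy (H : IsR2Pair le1 le2) (hPb : le2 P b) (hPt : Lt1 le1 P t)
    (hR : QFDefinable le1 le2 R) (hv : ∀ i, v i < P) (hPe : ∀ k, le1 P (e k)) (het : ∀ k, e k < t)
    (hve : R (Sum.elim v e)) (hσρ : σ ≤ ρ) (hρb : ρ < b) (hσb : le1 σ b) (k₀ : Y) :
    ∃ y, R (Sum.elim v y) ∧ ∀ k, ρ < y k ∧ le1 σ (y k) ∧ y k < b := by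
  have G := H.respectingPair
  let S (g : (A ⊕ Bool) ⊕ Y → Ordinal.{u}) : Prop :=
    R (g ∘ Sum.map Sum.inl id) ∧
      ∀ k, g (.inl (.inr true)) < g (.inr k) ∧ le1 (g (.inl (.inr false))) (g (.inr k))
  let T (g : (A ⊕ Bool) ⊕ Y → Ordinal.{u}) : Prop :=
    g (.inl (.inr false)) ≤ g (.inl (.inr true)) →
      (g (.inl (.inr false)) ≤ g (.inr k₀) ∧ ¬ le1 (g (.inl (.inr false))) (g (.inr k₀))) ∨ S g
  have hS : QFDefinable le1 le2 S := (hR.comp _).and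
    (.forall_finite fun k => (QFDefinable.lt_apply _ _).and (.le1_apply _ _))
  have hT : QFDefinable le1 le2 T := (QFDefinable.le_apply _ _).imp
    (((QFDefinable.le_apply _ _).and (QFDefinable.le1_apply _ _).not).or hS)
  have below_P : ForallExistsBelow P T v := by
    refine forallExistsBelow_iff.2 fun w hw => existsBelow_iff.2 ?_
    by_cases hz : ∃ z, w false ≤ z ∧ z < P ∧ ¬ le1 (w false) z
    · obtain ⟨z, hwz, hzP, hz⟩ := hz
      exact ⟨fun _ => z, fun _ => hzP, fun _ => .inl ⟨hwz, hz⟩⟩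
    push Not at hz
    have hPt' : P < t := (G.le_of_r1 hPt.1).lt_of_ne hPt.2
    have hwP : le1 (w false) P :=
      H.le1_of_forall_lt (H.exists_gt_of_le1 hPt.1 hPt') (hw false) hz
    obtain ⟨y, hy, hSy⟩ := H.reflect hPt.1 hS (v := Sum.elim v w) (Sum.forall.2 ⟨hv, hw⟩) het
      ⟨by rwa [Sum.elim_comp_map, Sum.elim_comp_inl],
        fun k => ⟨(hw true).trans_le (G.le_of_r1 (hPe k)), G.trans1 hwP (hPe k)⟩⟩
    exact ⟨y, hy, fun _ => .inr hSy⟩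
  have below_b := forallExistsBelow_iff.1 (H.forallExistsBelow_of_le2 hPb hT hv below_P)
    (Bool.rec σ ρ) (Bool.forall_bool.2 ⟨hσρ.trans_lt hρb, hρb⟩)
  obtain ⟨y, hy, hTy⟩ := existsBelow_iff.1 below_b
  obtain ⟨hσy, hn⟩ | ⟨hRy, hy'⟩ := hTy hσρ
  · exact (hn (G.respects1 hσy (hy k₀).le hσb)).elim
  · exact ⟨y, by rwa [Sum.elim_comp_map, Sum.elim_comp_inl] at hRy,
      fun k => ⟨(hy' k).1, (hy' k).2, hy k⟩⟩

theorem exists_copy_not_le2 (H : IsR2Pair le1 le2) (hPb : le2 P b) (hPt : Lt1 le1 P t)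
    (hR : QFDefinable le1 le2 R) (hv : ∀ i, v i < P) (hPe : ∀ k, le1 P (e k)) (het : ∀ k, e k < t)
    (hve : R (Sum.elim v e)) (hσρ : σ ≤ ρ) (hρb : ρ < b) (hσb : le1 σ b) (k₀ : Y) :
    ∃ y, R (Sum.elim v y) ∧ (∀ k, ρ < y k ∧ le1 σ (y k) ∧ y k < b) ∧ ¬ le2 P (y k₀) := by
  induction b using WellFoundedLT.induction with
  | ind b ih =>
    obtain ⟨y, hRy, hy⟩ := H.exists_copy hPb hPt hR hv hPe het hve hσρ hρb hσb k₀
    by_cases hP : le2 P (y k₀)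
    · obtain ⟨hρy, hσy, hyb⟩ := hy k₀
      obtain ⟨y', hRy', hy', hP'⟩ := ih (y k₀) hyb hP hρy hσy
      exact ⟨y', hRy', fun k => ⟨(hy' k).1, (hy' k).2.1, (hy' k).2.2.trans hyb⟩, hP'⟩
    · exact ⟨y, hRy, hy, hP⟩

end IsR2Pair

section WeakRealization

open Set

variable {ι : Type v} [LinearOrder ι] {r1 r2 : ι → ι → Prop}
  {le1 le2 : Ordinal.{u} → Ordinal.{u} → Prop} {S T U V : Set ι} {e e₁ e₂ f : ι → Ordinal.{u}}
  {c c' i j k l m π : ι} {x y t : Ordinal.{u}} {τ : ℕ → Ordinal.{u}} {M N : ℕ}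

/-- The ordinals `x < y` can be the values of `k < l` in a weak realization: `≤₁` has to be
preserved, and on `≤₁`-comparable points `≤₂` has to be reflected as well. -/
def PairMatches (le1 le2 : Ordinal.{u} → Ordinal.{u} → Prop) (r1 r2 : ι → ι → Prop) (k l : ι)
    (x y : Ordinal.{u}) : Prop :=
  x < y ∧ (r1 k l → le1 x y ∧ (r2 k l ↔ le2 x y))

/-- The map `e` is, on `S`, a covering of `(ι; r1, r2)` into `ℛ₂` which in addition reflects `≤₂`
on `≤₁`-comparable points. -/
def IsWeakRealizationOn (le1 le2 : Ordinal.{u} → Ordinal.{u} → Prop) (r1 r2 : ι → ι → Prop)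
    (S : Set ι) (e : ι → Ordinal.{u}) : Prop :=
  ∀ k ∈ S, ∀ l ∈ S, k < l → PairMatches le1 le2 r1 r2 k l (e k) (e l)

namespace IsWeakRealizationOn

theorem mono (h : IsWeakRealizationOn le1 le2 r1 r2 T e) (hST : S ⊆ T) :
    IsWeakRealizationOn le1 le2 r1 r2 S e :=
  fun k hk l hl => h k (hST hk) l (hST hl)

theorem strictMonoOn (h : IsWeakRealizationOn le1 le2 r1 r2 S e) : StrictMonoOn e S :=
  fun k hk l hl hkl => (h k hk l hl hkl).1

theorem map_r1 (h : IsWeakRealizationOn le1 le2 r1 r2 S e) (H : IsR2Pair le1 le2)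
    (G : RespectingPair r1 r2) (hk : k ∈ S) (hl : l ∈ S) (hkl : r1 k l) : le1 (e k) (e l) := by
  obtain rfl | hlt := (G.le_of_r1 hkl).eq_or_lt
  · exact H.respectingPair.refl1 _
  · exact ((h k hk l hl hlt).2 hkl).1

theorem map_r2 (h : IsWeakRealizationOn le1 le2 r1 r2 S e) (H : IsR2Pair le1 le2)
    (G : RespectingPair r1 r2) (hk : k ∈ S) (hl : l ∈ S) (hkl : r2 k l) : le2 (e k) (e l) := by
  obtain rfl | hlt := (G.le_of_r2 hkl).eq_or_lt
  · exact H.respectingPair.refl2 _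
  · exact ((h k hk l hl hlt).2 (G.r1_of_r2 hkl)).2.1 hkl

theorem le_of_mem_union_Icc
    (he : IsWeakRealizationOn le1 le2 r1 r2 ({a | r2 a i} ∪ Icc i m) e)
    (G : RespectingPair r1 r2) (him : i ≤ m) (hk : k ∈ {a | r2 a i} ∪ Icc i m) : e k ≤ e m :=
  he.strictMonoOn.monotoneOn hk (.inr (right_mem_Icc.2 him))
    (hk.elim (fun h => (G.le_of_r2 h).trans him) fun h => h.2)

theorem piecewise (hS : S ⊆ Iio c) (hT : T ⊆ Ici c)
    (h₁ : IsWeakRealizationOn le1 le2 r1 r2 S e₁) (h₂ : IsWeakRealizationOn le1 le2 r1 r2 T e₂)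
    (h : ∀ k ∈ S, ∀ l ∈ T, PairMatches le1 le2 r1 r2 k l (e₁ k) (e₂ l)) :
    IsWeakRealizationOn le1 le2 r1 r2 (S ∪ T) ((Iio c).piecewise e₁ e₂) := by
  have eq₁ {k} (hk : k ∈ S) : (Iio c).piecewise e₁ e₂ k = e₁ k :=
    piecewise_eq_of_mem _ _ _ (hS hk)
  have eq₂ {k} (hk : k ∈ T) : (Iio c).piecewise e₁ e₂ k = e₂ k :=
    piecewise_eq_of_notMem _ _ _ (not_lt.2 (hT hk))
  rintro k (hk | hk) l (hl | hl) hkl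
  · simpa only [eq₁ hk, eq₁ hl] using h₁ k hk l hl hkl
  · simpa only [eq₁ hk, eq₂ hl] using h k hk l hl
  · exact (((hS hl).trans_le (hT hk)).asymm hkl).elim
  · simpa only [eq₂ hk, eq₂ hl] using h₂ k hk l hl hkl

theorem insert_piecewise_const (hS : S ⊆ Iio c) (h : IsWeakRealizationOn le1 le2 r1 r2 S e)
    (hc : ∀ k ∈ S, PairMatches le1 le2 r1 r2 k c (e k) x) :
    IsWeakRealizationOn le1 le2 r1 r2 (insert c S) ((Iio c).piecewise e fun _ => x) := by
  rw [← union_singleton]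
  refine piecewise hS (singleton_subset_iff.2 self_mem_Ici) h ?_ ?_
  · rintro _ rfl _ rfl hlt
    exact hlt.false.elim
  · rintro k hk _ rfl
    exact hc k hk

end IsWeakRealizationOn

/-- The quantifier-free relation expressing that a tuple indexed by `U` and `V` is a weak
realization of `U ∪ V`. -/
def WeakDiagram (le1 le2 : Ordinal.{u} → Ordinal.{u} → Prop) (r1 r2 : ι → ι → Prop) (U V : Set ι)
    (g : U ⊕ V → Ordinal.{u}) : Prop :=
  ∀ s t : U ⊕ V, Sum.elim Subtype.val Subtype.val s < Sum.elim Subtype.val Subtype.val t →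
    PairMatches le1 le2 r1 r2 (Sum.elim Subtype.val Subtype.val s)
      (Sum.elim Subtype.val Subtype.val t) (g s) (g t)

theorem qfDefinable_weakDiagram [Finite ι] :
    QFDefinable le1 le2 (WeakDiagram le1 le2 r1 r2 U V) :=
  .forall_finite fun _ => .forall_finite fun _ => (QFDefinable.const _).imp <|
    (QFDefinable.lt_apply _ _).and <| (QFDefinable.const _).imp <|
      (QFDefinable.le1_apply _ _).and <| (QFDefinable.const _).iff (.le2_apply _ _)

theorem weakDiagram_sumElim_iff (hUV : ∀ k ∈ U, ∀ l ∈ V, k < l) :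
    WeakDiagram le1 le2 r1 r2 U V (Sum.elim (e₁ ∘ Subtype.val) (e₂ ∘ Subtype.val)) ↔
      IsWeakRealizationOn le1 le2 r1 r2 U e₁ ∧ IsWeakRealizationOn le1 le2 r1 r2 V e₂ ∧
        ∀ k ∈ U, ∀ l ∈ V, PairMatches le1 le2 r1 r2 k l (e₁ k) (e₂ l) := by
  constructor
  · intro h
    exact ⟨fun k hk l hl => h (.inl ⟨k, hk⟩) (.inl ⟨l, hl⟩),
      fun k hk l hl => h (.inr ⟨k, hk⟩) (.inr ⟨l, hl⟩),
      fun k hk l hl => h (.inl ⟨k, hk⟩) (.inr ⟨l, hl⟩) (hUV k hk l hl)⟩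
  · rintro ⟨h₁, h₂, h⟩ (⟨k, hk⟩ | ⟨k, hk⟩) (⟨l, hl⟩ | ⟨l, hl⟩) hkl
    · exact h₁ k hk l hl hkl
    · exact h k hk l hl
    · exact (hkl.asymm (hUV l hl k hk)).elim
    · exact h₂ k hk l hl hkl

/-- The point `i` is the immediate predecessor of `c` in the forest `r1`. -/
def IsImmediatePred (r1 : ι → ι → Prop) (i c : ι) : Prop :=
  i < c ∧ r1 i c ∧ ∀ k, k < c → r1 k c → k ≤ i

theorem IsImmediatePred.r2_left (hic : IsImmediatePred r1 i c) (G : RespectingPair r1 r2)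
    (hk : k < c) (hkc : r2 k c) : r2 k i :=
  G.respects2 (G.respects1 (hic.2.2 k hk (G.r1_of_r2 hkc)) hic.1.le (G.r1_of_r2 hkc)) hic.2.1 hkc

theorem IsImmediatePred.setOf_r2_eq_insert (hic : IsImmediatePred r1 i c)
    (G : RespectingPair r1 r2) (h : r2 i c) : {a | r2 a c} = insert c {a | r2 a i} := by
  ext a
  refine ⟨fun ha => ?_, ?_⟩
  · exact (G.le_of_r2 ha).eq_or_lt.imp_right fun hac => hic.r2_left G hac ha
  · rintro (rfl | ha)
    exacts [G.refl2 _, G.trans2 ha h]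

theorem IsImmediatePred.exists_least_not_r2 [Finite ι] (hic : IsImmediatePred r1 i c)
    (G : RespectingPair r1 r2) (h : ¬ r2 i c) :
    ∃ π, r2 π i ∧ (∀ a < c, r2 a c → a < π ∧ r2 a π) ∧
      ∀ a, r2 a i → ¬ r2 a c → r2 π a := by
  obtain ⟨π, ⟨hπi, hπc⟩, hmin⟩ := exists_minimal_of_wellFoundedLT
    (fun a => r2 a i ∧ ¬ r2 a c) ⟨i, G.refl2 i, h⟩
  refine ⟨π, hπi, fun a hac ha => ?_, fun a hai ha => ?_⟩
  · have hai := hic.r2_left G hac ha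
    have haπ : a < π := by
      by_contra! hπa
      exact hπc (G.trans2 (G.r2_of_le hπa hπi hai) ha)
    exact ⟨haπ, G.r2_of_le haπ.le hai hπi⟩
  · exact G.r2_of_le (le_of_not_gt fun hlt => hlt.not_ge (hmin ⟨hai, ha⟩ hlt.le)) hπi hai

theorem exists_isImmediatePred [Finite ι] (G : RespectingPair r1 r2) (him : i < m) (h : r1 i m) :
    ∃ c, IsImmediatePred r1 i c ∧ r1 c m := by
  obtain ⟨c, ⟨hic, hcm⟩, hmin⟩ := exists_minimal_of_wellFoundedLT
    (fun c => i < c ∧ r1 c m) ⟨m, him, G.refl1 m⟩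
  refine ⟨c, ⟨hic, G.respects1 hic.le (G.le_of_r1 hcm) h, fun k hkc hk => ?_⟩, hcm⟩
  by_contra! hik
  exact (hmin ⟨hik, G.trans1 hk hcm⟩ hkc.le).not_gt hkc

/-- Whenever `f` is a weak realization of the `r2`-predecessors of `i`, it can be extended to the
interval from `i` to `m` below the last member of every `<₂`-chain of length `N + 1` that lies
`<₂`-above `f i`. -/
def HasExtensionBound (le1 le2 : Ordinal.{u} → Ordinal.{u} → Prop) (r1 r2 : ι → ι → Prop)
    (i m : ι) (N : ℕ) : Prop :=
  ∀ (f : ι → Ordinal.{u}) (τ : ℕ → Ordinal.{u}),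
    (∀ p q, p < q → q ≤ N → Lt2 le2 (τ p) (τ q)) → (∀ p ≤ N, Lt2 le2 (f i) (τ p)) →
    IsWeakRealizationOn le1 le2 r1 r2 {a | r2 a i} f →
    ∃ e, EqOn e f {a | r2 a i} ∧ e m < τ N ∧
      IsWeakRealizationOn le1 le2 r1 r2 ({a | r2 a i} ∪ Icc i m) e

namespace HasExtensionBound

theorem mono (h : HasExtensionBound le1 le2 r1 r2 i m M) (hMN : M ≤ N) :
    HasExtensionBound le1 le2 r1 r2 i m N := by
  intro f τ hτ hf hfi
  obtain ⟨e, hef, hem, he⟩ := h f (fun p => τ (N - M + p))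
    (fun p q hpq hq => hτ _ _ (by lia) (by lia)) (fun p hp => hf _ (by lia)) hfi
  exact ⟨e, hef, by simpa [Nat.sub_add_cancel hMN] using hem, he⟩

theorem self (H : IsR2Pair le1 le2) (G : RespectingPair r1 r2) (i : ι) :
    HasExtensionBound le1 le2 r1 r2 i i 0 := by
  intro f τ _ hf hfi
  refine ⟨f, eqOn_refl _ _, H.lt_of_lt2 (hf 0 le_rfl), ?_⟩
  have hi : i ∈ {a | r2 a i} := G.refl2 i
  rwa [Icc_self, union_eq_self_of_subset_right (singleton_subset_iff.2 hi)]

end HasExtensionBound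

theorem exists_extension_of_glue (G : RespectingPair r1 r2)
    (hic : IsImmediatePred r1 i c) (hc : c' ⋖ c) (hcm : r1 c m)
    (he₁ : IsWeakRealizationOn le1 le2 r1 r2 ({a | r2 a i} ∪ Icc i c') e₁)
    (he₂ : IsWeakRealizationOn le1 le2 r1 r2 (Icc c m) e₂) (hlt : e₁ c' < e₂ c)
    (hcross : ∀ k l, r2 k i → l ∈ Icc c m → r1 k l →
      le1 (e₁ k) (e₂ l) ∧ (r2 k l ↔ le2 (e₁ k) (e₂ l))) :
    ∃ e, EqOn e e₁ {a | r2 a i} ∧ e m = e₂ m ∧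
      IsWeakRealizationOn le1 le2 r1 r2 ({a | r2 a i} ∪ Icc i m) e := by
  have hic' : i ≤ c' := hc.lt_iff_le_left.1 hic.1
  have hcm' := G.le_of_r1 hcm
  have hlt_c : {a | r2 a i} ∪ Icc i c' ⊆ Iio c := union_subset
    (fun a ha => (G.le_of_r2 ha).trans_lt hic.1) fun a ha => ha.2.trans_lt hc.lt
  refine ⟨(Iio c).piecewise e₁ e₂,
    fun a ha => piecewise_eq_of_mem _ _ _ (hlt_c (.inl ha)),
    piecewise_eq_of_notMem _ _ _ (not_lt.2 hcm'), ?_⟩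
  have hcover : {a | r2 a i} ∪ Icc i m ⊆ ({a | r2 a i} ∪ Icc i c') ∪ Icc c m := by
    rw [union_assoc]
    refine union_subset_union_right _ fun k hk => ?_
    exact (lt_or_ge k c).imp (fun h => ⟨hk.1, hc.lt_iff_le_left.1 h⟩) fun h => ⟨h, hk.2⟩
  refine (IsWeakRealizationOn.piecewise hlt_c Icc_subset_Ici_self he₁ he₂
    fun k hk l hl => ⟨?_, fun hkl => hcross k l ?_ hl hkl⟩).mono hcover
  · exact ((he₁.le_of_mem_union_Icc G hic' hk).trans_lt hlt).trans_le
      (he₂.strictMonoOn.monotoneOn (left_mem_Icc.2 hcm') hl hl.1)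
  · have hkc : r1 k c := G.respects1 (hlt_c hk).le hl.1 hkl
    exact hk.elim id fun h => (le_antisymm (hic.2.2 k (hlt_c hk) hkc) h.1) ▸ G.refl2 k

theorem HasExtensionBound.of_r2 (H : IsR2Pair le1 le2) (G : RespectingPair r1 r2)
    (hic : IsImmediatePred r1 i c) (hc : c' ⋖ c) (hcm : r1 c m) (h : r2 i c)
    (h₁ : HasExtensionBound le1 le2 r1 r2 i c' M) (h₂ : HasExtensionBound le1 le2 r1 r2 c m N) :
    HasExtensionBound le1 le2 r1 r2 i m (M + 1 + N) := by
  intro f τ hτ hf hfi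
  obtain ⟨e₁, he₁f, he₁τ, he₁⟩ := h₁ f τ (fun p q hpq hq => hτ p q hpq (by lia))
    (fun p hp => hf p (by lia)) hfi
  have hi : r2 i i := G.refl2 i
  have hf₂ : IsWeakRealizationOn le1 le2 r1 r2 {a | r2 a c}
      ((Iio c).piecewise f fun _ => τ M) := by
    rw [hic.setOf_r2_eq_insert G h]
    refine hfi.insert_piecewise_const (fun a ha => (G.le_of_r2 ha).trans_lt hic.1) fun k hk => ?_
    have hkτ : Lt2 le2 (f k) (τ M) := .of_le2 H (hfi.map_r2 H G hk hi hk) (hf M (by lia))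
    exact ⟨H.lt_of_lt2 hkτ, fun _ =>
      ⟨H.respectingPair.r1_of_r2 hkτ.1, iff_of_true (G.trans2 hk h) hkτ.1⟩⟩
  have f₂c : (Iio c).piecewise f (fun _ => τ M) c = τ M :=
    piecewise_eq_of_notMem _ _ _ self_notMem_Iio
  obtain ⟨e₂, he₂f, he₂τ, he₂⟩ := h₂ _ (fun p => τ (M + 1 + p))
    (fun p q hpq hq => hτ _ _ (by lia) (by lia))
    (fun p hp => by rw [f₂c]; exact hτ _ _ (by lia) (by lia)) hf₂
  have e₂_eq {k} (hk : r2 k i) : e₂ k = e₁ k := by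
    rw [he₁f hk, he₂f (G.trans2 hk h),
      piecewise_eq_of_mem _ _ _ (show k ∈ Iio c from (G.le_of_r2 hk).trans_lt hic.1)]
  obtain ⟨e, hee₁, hem, he⟩ := exists_extension_of_glue G hic hc hcm he₁
    (he₂.mono subset_union_right) (by rwa [he₂f (G.refl2 c), f₂c]) fun k l hk hl hkl => by
      rw [← e₂_eq hk]
      exact (he₂ k (.inl (G.trans2 hk h)) l (.inr hl)
        ((G.le_of_r2 hk).trans_lt (hic.1.trans_le hl.1))).2 hkl
  exact ⟨e, hee₁.trans he₁f, hem.trans_lt he₂τ, he⟩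

theorem exists_not_le2_extension [Finite ι] (H : IsR2Pair le1 le2) (G : RespectingPair r1 r2)
    (hUc : U ⊆ Iio c) (hcm : r1 c m) (he : IsWeakRealizationOn le1 le2 r1 r2 (U ∪ Icc c m) e)
    (het : Lt2 le2 (e c) t) (hem : e m < t) (hxy : x ≤ y) (hyt : y < t) (hxt : le1 x t) :
    ∃ e', IsWeakRealizationOn le1 le2 r1 r2 (Icc c m) e' ∧
      (∀ k ∈ U, ∀ l ∈ Icc c m, PairMatches le1 le2 r1 r2 k l (e k) (e' l)) ∧
      (∀ l ∈ Icc c m, y < e' l ∧ le1 x (e' l) ∧ e' l < t) ∧ ¬ le2 (e c) (e' c) := by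
  have hc : c ∈ Icc c m := left_mem_Icc.2 (G.le_of_r1 hcm)
  have hm : m ∈ Icc c m := right_mem_Icc.2 (G.le_of_r1 hcm)
  have hlt (k) (hk : k ∈ U) (l) (hl : l ∈ Icc c m) : k < l := (hUc hk).trans_le hl.1
  have diagram : WeakDiagram le1 le2 r1 r2 U (Icc c m)
      (Sum.elim (e ∘ Subtype.val) (e ∘ Subtype.val)) :=
    (weakDiagram_sumElim_iff hlt).2 ⟨he.mono subset_union_left, he.mono subset_union_right,
      fun k hk l hl => he k (.inl hk) l (.inr hl) (hlt k hk l hl)⟩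
  obtain ⟨y', hy', hyt', hnot⟩ := H.exists_copy_not_le2 het.1
    ⟨H.respectingPair.r1_of_r2 het.1, het.2⟩ qfDefinable_weakDiagram
    (fun k => he.strictMonoOn (.inl k.2) (.inr hc) (hUc k.2))
    (fun k => he.map_r1 H G (.inr hc) (.inr k.2) (G.respects1 k.2.1 k.2.2 hcm))
    (fun k => (he.strictMonoOn.monotoneOn (.inr k.2) (.inr hm) k.2.2).trans_lt hem)
    diagram hxy hyt hxt ⟨c, hc⟩
  obtain ⟨e', rfl⟩ := Subtype.val_injective.surjective_comp_right y'
  obtain ⟨-, he', hcross⟩ := (weakDiagram_sumElim_iff hlt).1 hy'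
  exact ⟨e', he', hcross, fun l hl => hyt' ⟨l, hl⟩, hnot⟩

theorem exists_extension_of_exists_least_not_r2 (G : RespectingPair r1 r2)
    (hic : IsImmediatePred r1 i c) (hm : HasExtensionBound le1 le2 r1 r2 c m N)
    (hπi : r2 π i) (hπ : ∀ a < c, r2 a c → a < π ∧ r2 a π)
    (hfi : IsWeakRealizationOn le1 le2 r1 r2 {a | r2 a i} f)
    (hτ : ∀ p q, p < q → q ≤ N → Lt2 le2 (τ p) (τ q)) (hfπ : ∀ p ≤ N, Lt2 le2 (f π) (τ p)) :
    ∃ e, EqOn e f {a | a < c ∧ r2 a c} ∧ e c = f π ∧ e m < τ N ∧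
      IsWeakRealizationOn le1 le2 r1 r2 ({a | a < c ∧ r2 a c} ∪ Icc c m) e := by
  let f₂ := (Iio c).piecewise f fun _ => f π
  have f₂c : f₂ c = f π := piecewise_eq_of_notMem _ _ _ self_notMem_Iio
  have preds_c : {a | r2 a c} = insert c {a | a < c ∧ r2 a c} := by
    ext a
    exact ⟨fun ha => (G.le_of_r2 ha).eq_or_lt.imp_right fun hac => ⟨hac, ha⟩,
      Or.rec (fun h => h ▸ G.refl2 c) And.right⟩
  have hf₂ : IsWeakRealizationOn le1 le2 r1 r2 {a | r2 a c} f₂ := by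
    rw [preds_c]
    refine (hfi.mono fun a ha => hic.r2_left G ha.1 ha.2).insert_piecewise_const
      (fun a ha => ha.1) fun a ha => ?_
    obtain ⟨haπ, haπ'⟩ := hπ a ha.1 ha.2
    obtain ⟨hlt, hr1⟩ := hfi a (hic.r2_left G ha.1 ha.2) π hπi haπ
    obtain ⟨hle1, hr2⟩ := hr1 (G.r1_of_r2 haπ')
    exact ⟨hlt, fun _ => ⟨hle1, iff_of_true ha.2 (hr2.1 haπ')⟩⟩
  obtain ⟨e, hef, hem, he⟩ := hm f₂ τ hτ (by rwa [f₂c]) hf₂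
  exact ⟨e, fun a ha => (hef ha.2).trans (piecewise_eq_of_mem _ _ _ ha.1),
    (hef (G.refl2 c)).trans f₂c, hem, he.mono (union_subset_union_left _ fun a ha => ha.2)⟩

theorem r2_iff_le2_of_not_le2 (H : IsR2Pair le1 le2) (G : RespectingPair r1 r2)
    (hic : IsImmediatePred r1 i c) (hcm : r1 c m)
    (hfi : IsWeakRealizationOn le1 le2 r1 r2 {a | r2 a i} f)
    (he : IsWeakRealizationOn le1 le2 r1 r2 (Icc c m) e)
    (hpred : ∀ k ∈ {a | a < c ∧ r2 a c}, ∀ l ∈ Icc c m,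
      PairMatches le1 le2 r1 r2 k l (f k) (e l))
    (hπi : r2 π i) (hπ : ∀ a, r2 a i → ¬ r2 a c → r2 π a) (hπc : ¬ le2 (f π) (e c))
    (hfe : ∀ l ∈ Icc c m, le1 (f i) (e l)) (hk : r2 k i) (hl : l ∈ Icc c m) (hkl : r1 k l) :
    r2 k l ↔ le2 (f k) (e l) := by
  have K := H.respectingPair
  have hi : r2 i i := G.refl2 i
  have hc : c ∈ Icc c m := left_mem_Icc.2 (G.le_of_r1 hcm)
  have hkc : k < c := (G.le_of_r2 hk).trans_lt hic.1
  have hcl : r1 c l := G.respects1 hl.1 hl.2 hcm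
  by_cases hkc2 : r2 k c
  · exact ((hpred k ⟨hkc, hkc2⟩ l hl).2 hkl).2
  · refine iff_of_false (fun h => hkc2 (G.respects2 (G.respects1 hkc.le hl.1 hkl) hcl h))
      fun h => hπc ?_
    have hπe : le1 (f π) (e c) :=
      K.trans1 (K.r1_of_r2 (hfi.map_r2 H G hπi hi hπi)) (hfe c hc)
    exact K.respects2 hπe (he.map_r1 H G hc hl hcl)
      (K.trans2 (hfi.map_r2 H G hπi hk (hπ k hk hkc2)) h)

/- With `π` least such that `r2 π i` and `¬ r2 π c`, the interval `[c, m]` is first realized with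
`f π` as the value of `c`, and then copied beyond the realization of `[i, c']` in such a way that
`f π` is not `≤₂` the new value of `c`. -/
theorem HasExtensionBound.of_not_r2 [Finite ι] (H : IsR2Pair le1 le2) (G : RespectingPair r1 r2)
    (hic : IsImmediatePred r1 i c) (hc : c' ⋖ c) (hcm : r1 c m) (h : ¬ r2 i c)
    (h₁ : HasExtensionBound le1 le2 r1 r2 i c' N) (h₂ : HasExtensionBound le1 le2 r1 r2 c m N) :
    HasExtensionBound le1 le2 r1 r2 i m N := by
  intro f τ hτ hf hfi
  have K := H.respectingPair
  have hi : r2 i i := G.refl2 i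
  have hcm' : c ≤ m := G.le_of_r1 hcm
  obtain ⟨e₁, he₁f, he₁τ, he₁⟩ := h₁ f τ hτ hf hfi
  obtain ⟨π, hπi, hltπ, hπle⟩ := hic.exists_least_not_r2 G h
  have hfπ (p) (hp : p ≤ N) : Lt2 le2 (f π) (τ p) := .of_le2 H (hfi.map_r2 H G hπi hi hπi) (hf p hp)
  obtain ⟨e₂, he₂f, he₂c, he₂τ, he₂⟩ :=
    exists_extension_of_exists_least_not_r2 G hic h₂ hπi hltπ hfi hτ hfπ
  have hle : f i ≤ e₁ c' :=
    (he₁f hi).ge.trans (he₁.le_of_mem_union_Icc G (hc.lt_iff_le_left.1 hic.1) (.inl hi))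
  obtain ⟨e₃, he₃, hpred, hbound, hnot⟩ := exists_not_le2_extension H G (fun a ha => ha.1) hcm he₂
    (he₂c ▸ hfπ N le_rfl) he₂τ hle he₁τ (K.r1_of_r2 (hf N le_rfl).1)
  have hpred' (k) (hk : k ∈ {a | a < c ∧ r2 a c}) (l) (hl : l ∈ Icc c m) :
      PairMatches le1 le2 r1 r2 k l (f k) (e₃ l) := he₂f hk ▸ hpred k hk l hl
  obtain ⟨e, hee₁, hem, he⟩ := exists_extension_of_glue G hic hc hcm he₁ he₃
    (hbound c (left_mem_Icc.2 hcm')).1 fun k l hk hl hkl => by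
      rw [he₁f hk]
      exact ⟨K.trans1 (K.r1_of_r2 (hfi.map_r2 H G hk hi hk)) (hbound l hl).2.1,
        r2_iff_le2_of_not_le2 H G hic hcm hfi he₃ hpred' hπi hπle (he₂c ▸ hnot)
          (fun l hl => (hbound l hl).2.1) hk hl hkl⟩
  exact ⟨e, hee₁.trans he₁f, hem.trans_lt (hbound m (right_mem_Icc.2 hcm')).2.2, he⟩

theorem exists_hasExtensionBound [Finite ι] (H : IsR2Pair le1 le2) (G : RespectingPair r1 r2)
    (him : r1 i m) : ∃ N, HasExtensionBound le1 le2 r1 r2 i m N := by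
  induction m using WellFoundedLT.induction generalizing i with
  | ind m ihm =>
  induction i using WellFoundedGT.induction with
  | ind i ihi =>
  obtain rfl | hlt := (G.le_of_r1 him).eq_or_lt
  · exact ⟨0, .self H G i⟩
  obtain ⟨c, hic, hcm⟩ := exists_isImmediatePred G hlt him
  obtain ⟨c', hic', hc⟩ := exists_le_covBy_of_lt hic.1
  have hcm' := G.le_of_r1 hcm
  obtain ⟨M, hM⟩ := ihm c' (hc.lt.trans_le hcm') (G.respects1 hic' (hc.le.trans hcm') him)
  obtain ⟨N, hN⟩ := ihi c hic.1 hcm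
  by_cases h : r2 i c
  · exact ⟨_, .of_r2 H G hic hc hcm h hM hN⟩
  · exact ⟨max M N, .of_not_r2 H G hic hc hcm h (hM.mono (le_max_left M N))
      (hN.mono (le_max_right M N))⟩

theorem exists_isWeakRealizationOn_univ [Finite ι] (H : IsR2Pair le1 le2)
    (G : RespectingPair r1 r2) :
    ∃ e : ι → Ordinal.{u}, (∀ k, e k < OneInfty le2) ∧
      IsWeakRealizationOn le1 le2 r1 r2 univ e := by
  obtain ⟨m, hm⟩ := Finite.exists_max (id : WithBot ι → WithBot ι)
  have hroot : extendBot True r1 ⊥ m := by cases m <;> trivial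
  obtain ⟨N, hN⟩ := exists_hasExtensionBound H G.withBot hroot
  obtain ⟨β, hβlt, hβ⟩ := exists_lt2_chain_lt_oneInfty H (N + 1)
  have hβ0 : IsWeakRealizationOn le1 le2 (extendBot True r1) (extendBot False r2)
      {a | extendBot False r2 a ⊥} fun _ => β 0 := by
    rintro (_ | k) hk (_ | l) hl hkl
    exacts [hkl.false.elim, hl.elim, hk.elim, hk.elim]
  obtain ⟨e, -, hem, he⟩ := hN (fun _ => β 0) (fun p => β (p + 1))
    (fun p q hpq hq => hβ _ _ (by lia) (by lia)) (fun p hp => hβ _ _ (by lia) (by lia)) hβ0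
  have hmem (k : ι) : (k : WithBot ι) ∈ {a | extendBot False r2 a ⊥} ∪ Icc ⊥ m :=
    .inr ⟨bot_le, hm k⟩
  exact ⟨fun k => e k,
    fun k => (he.le_of_mem_union_Icc G.withBot bot_le (hmem k)).trans_lt (hem.trans (hβlt _)),
    fun k _ l _ hkl => he k (hmem k) l (hmem l) (WithBot.coe_lt_coe.2 hkl)⟩

theorem RespectingPair.exists_least_not_r1 [Finite ι] (G : RespectingPair r1 r2) (hkl : k < l)
    (h : ¬ r1 k l) : ∃ j, k < j ∧ j ≤ l ∧ ¬ r1 k j ∧ ∀ i ∈ Ico k j, r1 k i := by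
  obtain ⟨j, ⟨hkj, hj⟩, hmin⟩ := exists_minimal_of_wellFoundedLT
    (fun j => k < j ∧ ¬ r1 k j) ⟨l, hkl, h⟩
  have hkj1 (i) (hi : i ∈ Ico k j) : r1 k i := by
    obtain rfl | hki := hi.1.eq_or_lt
    · exact G.refl1 k
    · by_contra h
      exact hi.2.not_ge (hmin ⟨hki, h⟩ hi.2.le)
  exact ⟨j, hkj, le_of_not_gt fun hlj => h (hkj1 l ⟨hkl.le, hlj⟩), hj, hkj1⟩

namespace IsWeakRealizationOn

theorem exists_reflection [Finite ι] (he : IsWeakRealizationOn le1 le2 r1 r2 univ e)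
    (H : IsR2Pair le1 le2) (hle : le1 (e k) (e j)) :
    ∃ e', IsWeakRealizationOn le1 le2 r1 r2 (Iio j) ((Iio k).piecewise e e') ∧
      ∀ i ∈ Ico k j, e' i < e k := by
  have hmono : StrictMono e := strictMonoOn_univ.1 he.strictMonoOn
  have hlt (a) (ha : a ∈ Iio k) (b) (hb : b ∈ Ico k j) : a < b := ha.trans_le hb.1
  have diagram := (weakDiagram_sumElim_iff hlt).2 ⟨he.mono (subset_univ _),
    he.mono (subset_univ _), fun a ha b hb => he a trivial b trivial (hlt a ha b hb)⟩
  obtain ⟨y, hyk, hy⟩ := H.reflect hle qfDefinable_weakDiagram (fun a => hmono a.2)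
    (fun b => hmono b.2.2) diagram
  obtain ⟨e', rfl⟩ := Subtype.val_injective.surjective_comp_right y
  obtain ⟨h₁, h₂, h₁₂⟩ := (weakDiagram_sumElim_iff hlt).1 hy
  refine ⟨e', (piecewise subset_rfl Ico_subset_Ici_self h₁ h₂ h₁₂).mono fun i hi => ?_,
    fun i hi => hyk ⟨i, hi⟩⟩
  exact (lt_or_ge i k).imp_right fun hki => ⟨hki, hi⟩

/- If `k ≤₁ l` holds only for the values of `e`, then the values on `[k, j)`, for the least `j > k`
with `¬ r1 k j`, can be reflected below `e k`. This destroys no required `≤₁`-relation, since none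
leads from `[k, j)` to `j` or beyond. -/
theorem exists_lt [Finite ι] (he : IsWeakRealizationOn le1 le2 r1 r2 univ e)
    (H : IsR2Pair le1 le2) (G : RespectingPair r1 r2) (hkl : k < l) (hr : ¬ r1 k l)
    (hle : le1 (e k) (e l)) : ∃ e' < e, IsWeakRealizationOn le1 le2 r1 r2 univ e' := by
  have hmono : StrictMono e := strictMonoOn_univ.1 he.strictMonoOn
  obtain ⟨j, hkj, hjl, hj, hkj1⟩ := G.exists_least_not_r1 hkl hr
  obtain ⟨e', he', hlt⟩ := he.exists_reflection H (H.respectingPair.respects1 (hmono hkj).le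
    (hmono.monotone hjl) hle)
  let e'' := (Iio k).piecewise e e'
  have eq_e {i} (hi : i < k) : e'' i = e i := piecewise_eq_of_mem _ _ _ hi
  have lt_e {i} (hi : i ∈ Ico k j) : e'' i < e k := by
    have : e'' i = e' i := piecewise_eq_of_notMem _ _ _ (not_lt.2 hi.1)
    exact this ▸ hlt i hi
  have le_e {i} (hi : i < j) : e'' i ≤ e i := (lt_or_ge i k).elim (fun h => (eq_e h).le)
    fun h => (lt_e ⟨h, hi⟩).le.trans (hmono.monotone h)
  refine ⟨(Iio j).piecewise e'' e, Pi.lt_def.2 ⟨fun i => ?_, k, ?_⟩,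
    (he'.piecewise subset_rfl (subset_refl (Ici j)) (he.mono (subset_univ _))
      fun a ha b hb => ?_).mono (by simp)⟩
  · by_cases hi : i ∈ Iio j
    · simpa only [piecewise_eq_of_mem _ _ _ hi] using le_e hi
    · exact (piecewise_eq_of_notMem _ _ _ hi).le
  · rw [piecewise_eq_of_mem _ _ _ (show k ∈ Iio j from hkj)]
    exact lt_e ⟨le_rfl, hkj⟩
  · refine ⟨(le_e ha).trans_lt (hmono (ha.trans_le hb)), fun hab => ?_⟩
    have hak : a < k := by
      by_contra! hka
      exact hj (G.respects1 hkj.le hb (G.trans1 (hkj1 a ⟨hka, ha⟩) hab))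
    have := (he a trivial b trivial (ha.trans_le hb)).2 hab
    rwa [← eq_e hak] at this

end IsWeakRealizationOn

theorem exists_realization [Finite ι] (H : IsR2Pair le1 le2) (G : RespectingPair r1 r2) :
    ∃ e : ι → Ordinal.{u}, (∀ k, e k < OneInfty le2) ∧ StrictMono e ∧
      (∀ k l, r1 k l ↔ le1 (e k) (e l)) ∧ ∀ k l, r2 k l ↔ le2 (e k) (e l) := by
  have K := H.respectingPair
  obtain ⟨e₀, he₀lt, he₀⟩ := exists_isWeakRealizationOn_univ H G
  obtain ⟨e, hee₀, he, hmin⟩ := exists_minimal_le_of_wellFoundedLT _ e₀ he₀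
  have hmono : StrictMono e := strictMonoOn_univ.1 he.strictMonoOn
  have h1 (k l) : r1 k l ↔ le1 (e k) (e l) := by
    refine ⟨he.map_r1 H G trivial trivial, fun hle => ?_⟩
    obtain rfl | hkl := (hmono.le_iff_le.1 (K.le_of_r1 hle)).eq_or_lt
    · exact G.refl1 k
    · by_contra hr
      obtain ⟨e', hlt, he'⟩ := he.exists_lt H G hkl hr hle
      exact hlt.not_ge (hmin he' hlt.le)
  refine ⟨e, fun k => (hee₀ k).trans_lt (he₀lt k), hmono, h1, fun k l =>
    ⟨he.map_r2 H G trivial trivial, fun hle => ?_⟩⟩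
  obtain rfl | hkl := (hmono.le_iff_le.1 (K.le_of_r2 hle)).eq_or_lt
  · exact G.refl2 k
  · exact ((he k trivial l trivial hkl).2 ((h1 k l).2 (K.r1_of_r2 hle))).2.2 hle

end WeakRealization

theorem RForest.respectingPair (F : RForest) [LinearOrder F.P] (hle : ∀ p q, p ≤ q ↔ F.le0 p q) :
    RespectingPair F.le1 F.le2 where
  refl2 := F.le2_refl
  trans1 := F.le1_trans _ _ _
  trans2 := F.le2_trans _ _ _
  le_of_r1 h := (hle _ _).2 (F.le1_sub_le0 _ _ h)
  r1_of_r2 := F.le2_sub_le1 _ _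
  respects1 hpq hqr := F.respects1 _ _ _ ((hle _ _).1 hpq) ((hle _ _).1 hqr)
  respects2 := F.respects2 _ _ _

theorem stmt2 (le1 le2 : Ordinal → Ordinal → Prop) (h : IsR2Pair le1 le2) (F : RForest) :
    ∃ c : F.P → Ordinal,
      IsCovering le1 le2 F c ∧
      (∀ p q : F.P, (F.le0 p q ↔ c p ≤ c q) ∧ (F.le1 p q ↔ le1 (c p) (c q)) ∧
        (F.le2 p q ↔ le2 (c p) (c q))) ∧
      ∀ p, c p < OneInfty le2 := by
  let : LinearOrder F.P :=
    { le := F.le0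
      le_refl := F.le0_refl
      le_trans := F.le0_trans
      le_antisymm := F.le0_antisymm
      le_total := F.le0_total
      toDecidableLE := Classical.decRel _ }
  obtain ⟨c, hlt, hmono, h1, h2⟩ := exists_realization h (F.respectingPair fun _ _ => Iff.rfl)
  have h0 (p q : F.P) : F.le0 p q ↔ c p ≤ c q := hmono.le_iff_le.symm
  exact ⟨c, ⟨h0, fun p q => (h1 p q).1, fun p q => (h2 p q).1⟩,
    fun p q => ⟨h0 p q, h1 p q, h2 p q⟩, hlt⟩
end

section
/- Each of ≤₁ and ≤₂ is a partial order on the class of ordinals, ≤₂ ⊆ ≤₁ ⊆ ≤, and both are forests: for every ordinal β, the set {γ : γ ≤₁ β} is linearly ordered by ≤₁ and the set {γ : γ ≤₂ β} is linearly ordered by ≤₂. -/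
open FirstOrder

/-!
`≤₁` and `≤₂` inherit their order properties from elementary substructure with respect to a class
of formulas, whatever the class. They are forests because any two segments below ordinals are
nested, and the smaller is elementary in the larger once both are elementary in a third: the truth
value of a formula in either of them can be read off in that third structure.
-/

namespace ElemSub

variable {C D : ∀ k : ℕ, ordLang.Formula (Fin k) → Prop} {le1 le2 : Ordinal → Ordinal → Prop}
  {a b c : Ordinal}

theorem le (hab : ElemSub C le1 le2 a b) : a ≤ b :=
  hab.1

protected theorem refl (a : Ordinal) : ElemSub C le1 le2 a a :=
  ⟨le_rfl, fun _ _ _ _ => Iff.rfl⟩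

protected theorem trans (hab : ElemSub C le1 le2 a b) (hbc : ElemSub C le1 le2 b c) :
    ElemSub C le1 le2 a c :=
  let ⟨le_ab, iff_ab⟩ := hab
  let ⟨le_bc, iff_bc⟩ := hbc
  ⟨le_ab.trans le_bc, fun k φ hφ v => (iff_ab k φ hφ v).trans (iff_bc k φ hφ _)⟩

protected theorem antisymm (hab : ElemSub C le1 le2 a b) (hba : ElemSub C le1 le2 b a) : a = b :=
  le_antisymm hab.le hba.le

theorem mono (hDC : ∀ k φ, D k φ → C k φ) (hab : ElemSub C le1 le2 a b) : ElemSub D le1 le2 a b :=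
  let ⟨le_ab, iff_ab⟩ := hab
  ⟨le_ab, fun k φ hφ => iff_ab k φ (hDC k φ hφ)⟩

theorem of_le (hac : a ≤ c) (hab : ElemSub C le1 le2 a b) (hcb : ElemSub C le1 le2 c b) :
    ElemSub C le1 le2 a c :=
  let ⟨_, iff_ab⟩ := hab
  let ⟨_, iff_cb⟩ := hcb
  ⟨hac, fun k φ hφ v =>
    (iff_ab k φ hφ v).trans (iff_cb k φ hφ fun j => ⟨v j, (v j).2.trans_le hac⟩).symm⟩

theorem total_below (hab : ElemSub C le1 le2 a b) (hcb : ElemSub C le1 le2 c b) :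
    ElemSub C le1 le2 a c ∨ ElemSub C le1 le2 c a :=
  (le_total a c).imp (of_le · hab hcb) (of_le · hcb hab)

end ElemSub

theorem IsSigma1.isSigma2_s7 {L : FirstOrder.Language} {α : Type} {n : ℕ}
    {φ : L.BoundedFormula α n} (hφ : IsSigma1 φ) : IsSigma2 φ := by
  induction hφ with
  | of_isQF hφ => exact .of_isPi1 (.of_isQF hφ)
  | ex _ ih => exact .ex ih

theorem stmt7 (le1 le2 : Ordinal → Ordinal → Prop) (h : IsR2Pair le1 le2) :
    (∀ a, le1 a a) ∧
    (∀ a b c, le1 a b → le1 b c → le1 a c) ∧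
    (∀ a b, le1 a b → le1 b a → a = b) ∧
    (∀ a, le2 a a) ∧
    (∀ a b c, le2 a b → le2 b c → le2 a c) ∧
    (∀ a b, le2 a b → le2 b a → a = b) ∧
    (∀ a b, le2 a b → le1 a b) ∧
    (∀ a b, le1 a b → a ≤ b) ∧
    (∀ β a c, le1 a β → le1 c β → le1 a c ∨ le1 c a) ∧
    (∀ β a c, le2 a β → le2 c β → le2 a c ∨ le2 c a) := by
  obtain ⟨le1_iff, le2_iff⟩ := h
  simp only [le1_iff, le2_iff]
  exact ⟨ElemSub.refl, fun _ _ _ => ElemSub.trans, fun _ _ => ElemSub.antisymm,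
    ElemSub.refl, fun _ _ _ => ElemSub.trans, fun _ _ => ElemSub.antisymm,
    fun _ _ => ElemSub.mono fun _ _ => IsSigma1.isSigma2_s7, fun _ _ => ElemSub.le,
    fun _ _ _ => ElemSub.total_below, fun _ _ _ => ElemSub.total_below⟩
end

section
/- For every ordinal α < 1^∞, the class {β : α ≤₁ β} has a greatest element, denoted lh(α); consequently, for all β one has α ≤₁ β if and only if α ≤ β ≤ lh(α). -/
open FirstOrder

/-!
Existential formulas pass from a segment to any longer one, so the class `{β : α ≤₁ β}` is convex.
It is closed under suprema: the segment below `sup S` is the directed union of the segments below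
the elements of `S`, and the finitely many witnesses of an existential formula already lie in one of
them. Finally it is bounded by `1^∞`: the existence of a `<₂`-chain of length `n` is a Σ₁-sentence,
so `α ≤₁ β` with `1^∞ ≤ β` would produce `<₂`-chains of every finite length below `α`, against the
minimality of `1^∞ > α`. Hence the class is a closed interval `[α, lh(α)]`.
-/

section ExistentialFormulas

open FirstOrder.Language FirstOrder.Language.BoundedFormula

variable {L : FirstOrder.Language}

theorem isSigma1_iff_isExistential {α : Type} {n : ℕ} {φ : L.BoundedFormula α n} :
    IsSigma1 φ ↔ φ.IsExistential := by
  constructor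
  · intro h
    induction h with
    | of_isQF h => exact .of_isQF h
    | ex _ ih => exact .ex ih
  · intro h
    induction h with
    | of_isQF h => exact .of_isQF h
    | ex _ ih => exact .ex ih

theorem isExistential_exs {α : Type*} {n : ℕ} {φ : L.BoundedFormula α n} (h : φ.IsExistential) :
    φ.exs.IsExistential := by
  induction n with
  | zero => exact h
  | succ n ih => exact ih h.ex

theorem isQF_iInf {α β : Type*} [Finite β] {n : ℕ} {f : β → L.BoundedFormula α n}
    (hf : ∀ b, (f b).IsQF) : (BoundedFormula.iInf f).IsQF := by
  have isQF_foldr (l : List β) : ((l.map f).foldr (· ⊓ ·) ⊤).IsQF := by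
    induction l with
    | nil => exact IsQF.top
    | cons b l ih => exact (hf b).inf ih
  exact isQF_foldr _

theorem realize_formula_embedding {α M N : Type*} [L.Structure M] [L.Structure N] (f : M ↪[L] N)
    {φ : L.Formula α} (hφ : IsExistential φ) {v : α → M} (h : φ.Realize v) :
    φ.Realize (f ∘ v) :=
  (φ.boundedFormula_realize_eq_realize _ _).1 (hφ.realize_embedding f h)

section DirectedUnion

variable {ι N : Type*} [Preorder ι] [IsDirectedOrder ι] {G : ι → Type*} [∀ i, L.Structure (G i)]
  [L.Structure N] (f : ∀ i j, i ≤ j → G i ↪[L] G j) (g : ∀ i, G i ↪[L] N)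

theorem exists_realize_of_directed_union (hgf : ∀ i j hij x, g j (f i j hij x) = g i x)
    (hg : ∀ y, ∃ i x, g i x = y) {α : Type*} {n : ℕ} {φ : L.BoundedFormula α n}
    (hφ : φ.IsExistential) {i : ι} {v : α → G i} {xs : Fin n → G i}
    (h : φ.Realize (g i ∘ v) (g i ∘ xs)) :
    ∃ j, ∃ hij : i ≤ j, φ.Realize (f i j hij ∘ v) (f i j hij ∘ xs) := by
  induction hφ generalizing i with
  | of_isQF hQF =>
    exact ⟨i, le_rfl, (hQF.realize_embedding _).2 ((hQF.realize_embedding _).1 h)⟩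
  | ex _ ih =>
    obtain ⟨y, hy⟩ := realize_ex.1 h
    obtain ⟨i', x, rfl⟩ := hg y
    obtain ⟨k, hik, hi'k⟩ := exists_ge_ge i i'
    have g_comp_f : g k ∘ f i k hik = g i := funext (hgf i k hik)
    obtain ⟨j, hkj, hj⟩ := ih (i := k) (v := f i k hik ∘ v)
      (xs := Fin.snoc (f i k hik ∘ xs) (f i' k hi'k x)) (by
        rwa [Fin.comp_snoc, ← Function.comp_assoc, ← Function.comp_assoc, g_comp_f, hgf])
    have f_comp_f : f k j hkj ∘ f i k hik = f i j (hik.trans hkj) :=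
      funext fun z => (g j).injective (by simp only [Function.comp_apply, hgf])
    refine ⟨j, hik.trans hkj, realize_ex.2 ⟨f k j hkj (f i' k hi'k x), ?_⟩⟩
    rwa [Fin.comp_snoc, ← Function.comp_assoc, ← Function.comp_assoc, f_comp_f] at hj

theorem exists_realize_formula_of_directed_union
    (hgf : ∀ i j hij x, g j (f i j hij x) = g i x) (hg : ∀ y, ∃ i x, g i x = y)
    {α : Type*} {φ : L.Formula α} (hφ : IsExistential φ) {i : ι} {v : α → G i}
    (h : φ.Realize (g i ∘ v)) :
    ∃ j, ∃ hij : i ≤ j, φ.Realize (f i j hij ∘ v) := by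
  obtain ⟨j, hij, hj⟩ := exists_realize_of_directed_union f g hgf hg hφ (xs := default)
    ((φ.boundedFormula_realize_eq_realize _ _).2 h)
  exact ⟨j, hij, (φ.boundedFormula_realize_eq_realize _ _).1 hj⟩

end DirectedUnion

/-- The formula `R xᵢ xⱼ ∧ xᵢ ≠ xⱼ`, for the strict part of the binary relation symbol `R`. -/
def strictRel {α : Type*} (R : L.Relations 2) {n : ℕ} (i j : Fin n) : L.BoundedFormula α n :=
  R.boundedFormula₂ (&i) (&j) ⊓ ∼(&i =' &j)

theorem isQF_strictRel {α : Type*} (R : L.Relations 2) {n : ℕ} (i j : Fin n) :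
    (strictRel R i j : L.BoundedFormula α n).IsQF :=
  (IsAtomic.rel _ _).isQF.inf (IsAtomic.equal _ _).isQF.not

/-- The existential formula `∃ x₀ … xₙ₋₁, ⋀ᵢ (R xᵢ xᵢ₊₁ ∧ xᵢ ≠ xᵢ₊₁)`, stating that there is a
chain of length `n` for the strict part of `R`. -/
noncomputable def strictChain {α : Type*} (R : L.Relations 2) (n : ℕ) : L.Formula α :=
  (BoundedFormula.iInf fun i : {i : Fin n // i.1 + 1 < n} =>
    strictRel R i.1 ⟨i.1 + 1, i.2⟩).exs

theorem isExistential_strictChain {α : Type*} (R : L.Relations 2) (n : ℕ) :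
    IsExistential (strictChain R n : L.Formula α) :=
  isExistential_exs (isQF_iInf fun _ => isQF_strictRel R _ _).isExistential

theorem realize_strictChain {α M : Type*} [L.Structure M] (R : L.Relations 2) (n : ℕ)
    {v : α → M} :
    (strictChain R n).Realize v ↔ ∃ xs : Fin n → M, ∀ (i : ℕ) (hi : i + 1 < n),
      Structure.RelMap R ![xs ⟨i, Nat.lt_of_succ_lt hi⟩, xs ⟨i + 1, hi⟩] ∧
        xs ⟨i, Nat.lt_of_succ_lt hi⟩ ≠ xs ⟨i + 1, hi⟩ := by
  simp only [strictChain, realize_exs, realize_iInf, strictRel, realize_inf, realize_not,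
    realize_rel₂, realize_bdEqual]
  exact exists_congr fun xs =>
    ⟨fun h i hi => h ⟨⟨i, Nat.lt_of_succ_lt hi⟩, hi⟩, fun h i => h i.1 i.2⟩

end ExistentialFormulas

section Segments

open FirstOrder.Language FirstOrder.Language.BoundedFormula

/-- The segment `{x | x < β}`, as a type on which `(β; ≤, le1, le2)` can be a structure found by
instance resolution: the unused arguments record the relations. -/
def Seg (_le1 _le2 : Ordinal → Ordinal → Prop) (β : Ordinal) := {x : Ordinal // x < β}

variable {le1 le2 : Ordinal → Ordinal → Prop} {α β γ : Ordinal}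

instance : ordLang.Structure (Seg le1 le2 β) := segStr le1 le2 β

/-- The inclusion of `(α; ≤, le1, le2)` into `(β; ≤, le1, le2)` for `α ≤ β`. -/
def segInclusion (h : α ≤ β) : Seg le1 le2 α ↪[ordLang] Seg le1 le2 β where
  toFun x := ⟨x.1, x.2.trans_le h⟩
  inj' _ _ hxy := Subtype.ext (Subtype.mk.inj hxy)
  map_fun' f := f.elim
  map_rel' R _ := by cases R <;> rfl

/-- The segment below `α` is a Σ₁-elementary substructure of the segment below `β`, for arbitrary
binary relations `le1` and `le2` on the ordinals. -/
abbrev Sigma1ElemSub (le1 le2 : Ordinal → Ordinal → Prop) (α β : Ordinal) : Prop :=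
  ElemSub (fun _ φ => IsSigma1 φ) le1 le2 α β

theorem sigma1ElemSub_iff :
    Sigma1ElemSub le1 le2 α β ↔ ∃ h : α ≤ β, ∀ (k : ℕ) (φ : ordLang.Formula (Fin k)),
      IsExistential φ → ∀ v : Fin k → Seg le1 le2 α,
        φ.Realize (segInclusion h ∘ v) → φ.Realize v :=
  exists_congr fun h => forall₂_congr fun _ _ =>
    ⟨fun H hφ v => (H (isSigma1_iff_isExistential.2 hφ) v).2,
      fun H hφ v =>
        have hφ := isSigma1_iff_isExistential.1 hφ
        ⟨realize_formula_embedding (segInclusion h) hφ, H hφ v⟩⟩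

theorem Sigma1ElemSub.refl : Sigma1ElemSub le1 le2 α α :=
  sigma1ElemSub_iff.2 ⟨le_rfl, fun _ _ _ _ => id⟩

theorem Sigma1ElemSub.le (h : Sigma1ElemSub le1 le2 α β) : α ≤ β :=
  h.1

theorem Sigma1ElemSub.of_le_of_le (hβ : Sigma1ElemSub le1 le2 α β) (hαγ : α ≤ γ) (hγβ : γ ≤ β) :
    Sigma1ElemSub le1 le2 α γ := by
  obtain ⟨_, realize_down⟩ := sigma1ElemSub_iff.1 hβ
  exact sigma1ElemSub_iff.2 ⟨hαγ, fun k φ hφ v hv =>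
    realize_down k φ hφ v (realize_formula_embedding (segInclusion hγβ) hφ hv)⟩

theorem Sigma1ElemSub.of_isLUB {S : Set Ordinal} {μ : Ordinal} (hμ : IsLUB S μ)
    (hα : α ∈ S) (hS : ∀ β ∈ S, Sigma1ElemSub le1 le2 α β) : Sigma1ElemSub le1 le2 α μ := by
  refine sigma1ElemSub_iff.2 ⟨hμ.1 hα, fun k φ hφ v hv => ?_⟩
  have segs_cover (y : Seg le1 le2 μ) :
      ∃ (β : S) (x : Seg le1 le2 β), segInclusion (hμ.1 β.2) x = y := by
    obtain ⟨β, hβ, hyβ⟩ := (lt_isLUB_iff hμ).1 y.2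
    exact ⟨⟨β, hβ⟩, ⟨y.1, hyβ⟩, rfl⟩
  obtain ⟨⟨β, hβ⟩, _, hvβ⟩ := exists_realize_formula_of_directed_union (ι := S) (i := ⟨α, hα⟩)
    (fun _ _ h => segInclusion h) (fun β => segInclusion (hμ.1 β.2)) (fun _ _ _ _ => rfl)
    segs_cover hφ hv
  obtain ⟨_, realize_down⟩ := sigma1ElemSub_iff.1 (hS β hβ)
  exact realize_down k φ hφ v hvβ

/-- Below `ν` there is a `<₂`-chain of length `n`, where `<₂` is the strict part of `le2`. -/
def HasLt2Chain (le2 : Ordinal → Ordinal → Prop) (ν : Ordinal) (n : ℕ) : Prop :=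
  ∃ β : Fin n → Ordinal, (∀ i, β i < ν) ∧
    ∀ (i : ℕ) (hi : i + 1 < n), Lt2 le2 (β ⟨i, Nat.lt_of_succ_lt hi⟩) (β ⟨i + 1, hi⟩)

theorem HasLt2Chain.mono {n : ℕ} (h : HasLt2Chain le2 α n) (hαβ : α ≤ β) :
    HasLt2Chain le2 β n :=
  h.imp fun _ hc => ⟨fun i => (hc.1 i).trans_le hαβ, hc.2⟩

theorem realize_strictChain_le2_iff_hasLt2Chain {κ : Type*} {n : ℕ} {v : κ → Seg le1 le2 β} :
    (strictChain (L := ordLang) ordRel.le2 n).Realize v ↔ HasLt2Chain le2 β n := by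
  refine (realize_strictChain _ n).trans ⟨?_, ?_⟩
  · rintro ⟨xs, hxs⟩
    exact ⟨fun i => (xs i).1, fun i => (xs i).2, fun i hi =>
      ⟨(hxs i hi).1, fun h => (hxs i hi).2 (Subtype.ext h)⟩⟩
  · rintro ⟨c, hcβ, hc⟩
    exact ⟨fun i => ⟨c i, hcβ i⟩, fun i hi =>
      ⟨(hc i hi).1, fun h => (hc i hi).2 (congrArg Subtype.val h)⟩⟩

theorem Sigma1ElemSub.hasLt2Chain {n : ℕ} (h : Sigma1ElemSub le1 le2 α β)
    (hβ : HasLt2Chain le2 β n) : HasLt2Chain le2 α n := by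
  obtain ⟨_, realize_down⟩ := sigma1ElemSub_iff.1 h
  exact realize_strictChain_le2_iff_hasLt2Chain.1 <|
    realize_down 0 _ (isExistential_strictChain _ n) Fin.elim0
      (realize_strictChain_le2_iff_hasLt2Chain.2 hβ)

-- If no ordinal has chains of every length below it, `OneInfty le2` is the junk value `sInf ∅ = 0`.
theorem hasLt2Chain_oneInfty (h : 0 < OneInfty le2) (n : ℕ) :
    HasLt2Chain le2 (OneInfty le2) n := by
  have nonempty : {ν | ∀ n, HasLt2Chain le2 ν n}.Nonempty := by
    by_contra hempty
    rw [Set.not_nonempty_iff_eq_empty] at hempty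
    exact h.ne' ((congrArg sInf hempty).trans Ordinal.sInf_empty)
  exact csInf_mem nonempty n

theorem Sigma1ElemSub.lt_oneInfty (h : Sigma1ElemSub le1 le2 α β) (hα : α < OneInfty le2) :
    β < OneInfty le2 := by
  by_contra! hβ
  have hasLt2Chain_α (n : ℕ) : HasLt2Chain le2 α n :=
    h.hasLt2Chain ((hasLt2Chain_oneInfty (bot_le.trans_lt hα) n).mono hβ)
  exact notMem_of_lt_csInf' hα hasLt2Chain_α

end Segments

theorem stmt9_general (le1 le2 : Ordinal → Ordinal → Prop) (α : Ordinal)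
    (hα : α < OneInfty le2) :
    ∃ m : Ordinal, (Sigma1ElemSub le1 le2 α m ∧ ∀ β, Sigma1ElemSub le1 le2 α β → β ≤ m) ∧
      ∀ β, Sigma1ElemSub le1 le2 α β ↔ α ≤ β ∧ β ≤ m := by
  have hbdd : BddAbove {β | Sigma1ElemSub le1 le2 α β} :=
    ⟨OneInfty le2, fun _ hβ => (hβ.lt_oneInfty hα).le⟩
  have hlub := isLUB_csSup ⟨α, Sigma1ElemSub.refl⟩ hbdd
  have hmem := Sigma1ElemSub.of_isLUB hlub Sigma1ElemSub.refl fun _ => id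
  exact ⟨_, ⟨hmem, hlub.1⟩, fun β =>
    ⟨fun hβ => ⟨hβ.le, hlub.1 hβ⟩, fun hβ => hmem.of_le_of_le hβ.1 hβ.2⟩⟩

theorem stmt9 (le1 le2 : Ordinal → Ordinal → Prop) (h : IsR2Pair le1 le2)
    (α : Ordinal) (hα : α < OneInfty le2) :
    ∃ m : Ordinal, (le1 α m ∧ ∀ β, le1 α β → β ≤ m) ∧
      ∀ β, le1 α β ↔ α ≤ β ∧ β ≤ m := by
  simpa only [h.1] using stmt9_general le1 le2 α hα
end
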